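/- (Theorem 1(i), elliptic regime, Lyapunov exponent.) Let E_b be a band edge (no band touching) of the periodic background operator H_0 of the family of random Jacobi matrices (H_{λ,ω})_{λ≥0}, and assume the perturbation is non-trivial at the band edge, i.e. 𝐄_σ(x_σ²) > 0. Let 4/5 < η < 4/3 and let ε ≠ 0 have the sign such that E_b + ελ^η lies inside the band of H_0 for all small λ > 0 (equivalently |Tr(𝒯^{E_b+ελ^η}_{0,σ})| < 2 for small λ > 0). Then for small λ > 0 the limit defining the Lyapunov exponent γ_λ(E_b+ελ^η) exists and γ_λ(E_b+ελ^η) = λ^{2−η} · 𝐄_σ(x_σ²)/(8 L |ε x|) + O(λ^{3η/2} + λ^{4−5η/2}); in particular γ_λ(E_b+ελ^η) = B λ^{2−η} + O(λ^{2−η+δ}) with B = 𝐄_σ(x_σ²)/(8L|εx|) and some δ > 0. -/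

import Mathlib

/-!
The asymptotics comes from a second-order perturbation theory for a random dynamical system on the
unit disc.

A real 2×2 matrix acts on `ℂ = ℝ²` as `z ↦ A z + B conj z`, with `A = cA m` and `B = cB m`. For
determinant one, `log |A|` agrees with the logarithm of the norm up to a bounded error, and left
multiplication moves the disc coordinate `ζ = B / conj A` by a Möbius map while `log |A|²` increases
by an explicit function of `ζ` (`Phi_mul`). Hence the Lyapunov exponent is half of the mean increment
per step, and adding a bounded corrector `Re (α ζ + β ζ²)` changes nothing. If for suitable `α`, `β`
the mean increment is within `err` of a constant `v` for every `ζ` in the closed disc, the exponent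
(which exists by subadditivity) is within `err / 2` of `v / 2`; this is `lyapunov_of_step`, which needs
no information on the invariant measure.

If the random matrix is a rotation `w` perturbed by noise whose coefficients `a`, `b` are both close
to the same `i τ`, the mean increment is, to second order, `𝐄 τ² Re (1 + ζ)²`. Its terms of degree
one and two in `ζ` oscillate under the rotation, and the correctors `α = -2 𝐄 τ² / (w² - 1)`,
`β = -𝐄 τ² / (w⁴ - 1)` remove them, leaving `v = 𝐄 τ²` (`stepF_integral`).

To reach this situation, put `θ = λ^(η/2)` and `κ = λ^(1 - η/2)`, so that `λ = κ θ` and the energy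
offset is `ε θ²`. Since the derivative `x` of the trace is non-zero, the transfer matrix at the band
edge is not `±1`, hence is conjugate to `±` a Jordan block, and in that basis the lower left entry of
the noise is `± x_σ` (`normal_form`). Inside the band the unperturbed matrix is elliptic with an angle
whose sine is approximately `√|ε x| θ`; the conjugation turning it into a rotation amplifies the lower
left entry of the noise by `1 / θ`, which gives noise of size `κ` with `τ ≈ κ x_σ / (2 √|ε x|)`
(`elliptic_step`). Thus the exponent per cell is `κ² 𝐄 x_σ² / (8 |ε x|) + O(θ³ + κ⁴ / θ)`
(`lyapunov_scaling`), and `θ³ = λ^(3η/2)`, `κ⁴ / θ = λ^(4 - 5η/2)`.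
-/

/- Statement 0: Theorem 1(i), elliptic regime: asymptotics of the Lyapunov
exponent of a weakly random Jacobi matrix near a band edge. -/

open MeasureTheory Filter Real Set

namespace BandEdge

/-- The one-site transfer matrix `𝒯^E(t,v)`. -/
noncomputable def transfer (E t v : ℝ) : Matrix (Fin 2) (Fin 2) ℝ :=
  !![(E - v) / t, -t; 1 / t, 0]

/-- An explicit (Frobenius) norm on 2×2 real matrices. -/
noncomputable def matNorm (A : Matrix (Fin 2) (Fin 2) ℝ) : ℝ :=
  Real.sqrt (∑ i, ∑ j, (A i j) ^ 2)

/-- The transfer matrix `𝒯^E_{λ,σ}` over one unit cell of length `L`: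
the ordered product of the one-site transfer matrices with coefficients
`t̂_l + λ t̃_l(σ)` and `v̂_l + λ ṽ_l(σ)`. -/
noncomputable def cellT (L : ℕ) (that vhat : ℕ → ℝ) {S : Type*} (ttil vtil : ℕ → S → ℝ)
    (lam E : ℝ) (σ : S) : Matrix (Fin 2) (Fin 2) ℝ :=
  (List.ofFn (fun l : Fin L =>
    transfer E (that l + lam * ttil l σ) (vhat l + lam * vtil l σ))).prod

/-- The finite-volume approximation `(LN)⁻¹ 𝐄 log ‖𝒯^E_{λ,σ_N} ⋯ 𝒯^E_{λ,σ_1}‖`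
of the Lyapunov exponent, the expectation being over i.i.d. `σ_1,…,σ_N` with law `μ`. -/
noncomputable def lyapFin (L : ℕ) (that vhat : ℕ → ℝ) {S : Type*} [MeasurableSpace S]
    (μ : Measure S) (ttil vtil : ℕ → S → ℝ) (lam E : ℝ) (N : ℕ) : ℝ :=
  ((L : ℝ) * N)⁻¹ *
    ∫ ω : Fin N → S,
      Real.log (matNorm
        (List.ofFn (fun n : Fin N => cellT L that vhat ttil vtil lam E (ω n))).prod)
      ∂(Measure.pi fun _ => μ)

/-! ### Real 2×2 matrices as real-linear maps of the complex plane -/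

/-- Complex-linear coefficient of a real matrix: under `ℝ² ≃ ℂ` the matrix acts as
`u ↦ cA m * u + cB m * conj u`. -/
noncomputable def cA (m : Matrix (Fin 2) (Fin 2) ℝ) : ℂ :=
  ⟨(m 0 0 + m 1 1) / 2, (m 1 0 - m 0 1) / 2⟩

/-- Antilinear coefficient of a real matrix, see `cA`. -/
noncomputable def cB (m : Matrix (Fin 2) (Fin 2) ℝ) : ℂ :=
  ⟨(m 0 0 - m 1 1) / 2, (m 1 0 + m 0 1) / 2⟩

lemma cA_mul (m n : Matrix (Fin 2) (Fin 2) ℝ) :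
    cA (m * n) = cA m * cA n + cB m * (starRingEnd ℂ) (cB n) := by
  apply Complex.ext <;> simp [cA, cB, Matrix.mul_apply, Fin.sum_univ_two] <;> ring

lemma cB_mul (m n : Matrix (Fin 2) (Fin 2) ℝ) :
    cB (m * n) = cA m * cB n + cB m * (starRingEnd ℂ) (cA n) := by
  apply Complex.ext <;> simp [cA, cB, Matrix.mul_apply, Fin.sum_univ_two] <;> ring

lemma norm_sq_cA_sub (m : Matrix (Fin 2) (Fin 2) ℝ) :
    ‖cA m‖ ^ 2 - ‖cB m‖ ^ 2 = m.det := by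
  rw [← Complex.normSq_eq_norm_sq, ← Complex.normSq_eq_norm_sq, Matrix.det_fin_two]
  simp [cA, cB, Complex.normSq_apply]; ring

lemma matNorm_sq (m : Matrix (Fin 2) (Fin 2) ℝ) :
    matNorm m ^ 2 = m 0 0 ^ 2 + m 0 1 ^ 2 + m 1 0 ^ 2 + m 1 1 ^ 2 := by
  rw [matNorm, Real.sq_sqrt (by positivity)]
  simp [Fin.sum_univ_two]; ring

lemma matNorm_nonneg (m : Matrix (Fin 2) (Fin 2) ℝ) : 0 ≤ matNorm m := Real.sqrt_nonneg _

lemma matNorm_sq_eq (m : Matrix (Fin 2) (Fin 2) ℝ) :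
    matNorm m ^ 2 = 2 * (‖cA m‖ ^ 2 + ‖cB m‖ ^ 2) := by
  rw [← Complex.normSq_eq_norm_sq, ← Complex.normSq_eq_norm_sq, matNorm_sq]
  simp [cA, cB, Complex.normSq_apply]; ring

lemma matNorm_mul_le (m n : Matrix (Fin 2) (Fin 2) ℝ) :
    matNorm (m * n) ≤ matNorm m * matNorm n := by
  apply le_of_sq_le_sq _ (mul_nonneg (matNorm_nonneg _) (matNorm_nonneg _))
  rw [mul_pow, matNorm_sq, matNorm_sq, matNorm_sq]
  simp only [Matrix.mul_apply, Fin.sum_univ_two]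
  nlinarith [sq_nonneg (m 0 0 * n 1 0 - m 0 1 * n 0 0), sq_nonneg (m 0 0 * n 1 1 - m 0 1 * n 0 1),
    sq_nonneg (m 1 0 * n 1 0 - m 1 1 * n 0 0), sq_nonneg (m 1 0 * n 1 1 - m 1 1 * n 0 1)]

lemma one_le_norm_cA {m : Matrix (Fin 2) (Fin 2) ℝ} (h : m.det = 1) : 1 ≤ ‖cA m‖ := by
  have := norm_sq_cA_sub m
  nlinarith [norm_nonneg (cA m), sq_nonneg ‖cB m‖]

lemma norm_cB_le {m : Matrix (Fin 2) (Fin 2) ℝ} (h : m.det = 1) : ‖cB m‖ ≤ ‖cA m‖ := by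
  have := norm_sq_cA_sub m
  apply le_of_sq_le_sq _ (norm_nonneg _)
  linarith

lemma norm_cA_le (m : Matrix (Fin 2) (Fin 2) ℝ) : ‖cA m‖ ≤ matNorm m := by
  apply le_of_sq_le_sq _ (matNorm_nonneg _)
  rw [matNorm_sq_eq]; nlinarith [sq_nonneg ‖cA m‖, sq_nonneg ‖cB m‖]

lemma matNorm_le {m : Matrix (Fin 2) (Fin 2) ℝ} (h : m.det = 1) : matNorm m ≤ 2 * ‖cA m‖ := by
  have := norm_sq_cA_sub m
  apply le_of_sq_le_sq _ (by positivity)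
  rw [matNorm_sq_eq]; nlinarith [sq_nonneg ‖cA m‖, sq_nonneg ‖cB m‖]

lemma one_le_matNorm {m : Matrix (Fin 2) (Fin 2) ℝ} (h : m.det = 1) : 1 ≤ matNorm m :=
  (one_le_norm_cA h).trans (norm_cA_le m)

/-! ### One step of the random Möbius dynamics -/

/-- The denominator `conj p + conj q * ζ` of the Möbius map of the disc defined by `(p, q)`. -/
noncomputable def mden (p q ζ : ℂ) : ℂ := (starRingEnd ℂ) p + (starRingEnd ℂ) q * ζ

/-- The Möbius map of the unit disc defined by `(p, q)`. -/
noncomputable def mob (p q ζ : ℂ) : ℂ := (p * ζ + q) / mden p q ζ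

/-- Increment, in one step of the dynamics, of the corrected logarithm `log |A|² + Re (α ζ + β ζ²)`
where `ζ = B / conj A`. -/
noncomputable def stepF (α β p q ζ : ℂ) : ℝ :=
  2 * Real.log ‖mden p q ζ‖ + (α * (mob p q ζ - ζ)).re + (β * (mob p q ζ ^ 2 - ζ ^ 2)).re

lemma log_norm_one_add {h : ℂ} (hh : ‖h‖ ≤ 1 / 2) :
    |Real.log ‖1 + h‖ - (h.re - (h ^ 2).re / 2)| ≤ ‖h‖ ^ 3 := by
  have h1 := Complex.norm_log_sub_logTaylor_le 2 (z := h) (by linarith)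
  have h2 : Complex.logTaylor 3 h = h - h ^ 2 / 2 := by
    simp [Complex.logTaylor, Finset.sum_range_succ]; ring
  norm_num [h2] at h1
  have h3 : Real.log ‖1 + h‖ - (h.re - (h ^ 2).re / 2)
      = (Complex.log (1 + h) - (h - h ^ 2 / 2)).re := by
    have : (h ^ 2 / 2 : ℂ).re = (h ^ 2).re / 2 := by
      rw [show (h ^ 2 / 2 : ℂ) = h ^ 2 / ((2 : ℝ) : ℂ) by norm_num, Complex.div_ofReal_re]
    simp only [Complex.sub_re, Complex.log_re, this]
  rw [h3]
  refine (Complex.abs_re_le_norm _).trans (h1.trans ?_)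
  have h4 : (1 - ‖h‖)⁻¹ ≤ 2 := by
    rw [inv_le_comm₀ (by linarith) (by norm_num)]; linarith
  have : 0 ≤ ‖h‖ ^ 3 := by positivity
  nlinarith

set_option maxHeartbeats 1000000 in
/-- Second-order expansion of the increment. Here `p = w (1 + a)` and `q = w b` are perturbations
of the rotation `w`, with `a` and `b` both close to the same imaginary number `i τ`. The terms
linear in `a`, `b` are kept exactly, since they are later integrated. -/
lemma stepF_expand {α β w a b ζ : ℂ} {τ K κ θ B : ℝ} (hw : ‖w‖ = 1) (hK : 0 ≤ K) (hκ : 0 ≤ κ)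
    (hθ : 0 ≤ θ)
    (hKκ : K * κ ≤ 1 / 4) (ha : ‖a‖ ≤ K * κ) (hb : ‖b‖ ≤ K * κ) (hτ : |τ| ≤ K * κ)
    (haτ : ‖a - Complex.I * τ‖ ≤ K * κ * θ) (hbτ : ‖b - Complex.I * τ‖ ≤ K * κ * θ)
    (hα : ‖α‖ ≤ B) (hβ : ‖β‖ ≤ B) (hζ : ‖ζ‖ ≤ 1) :
    |stepF α β (w * (1 + a)) (w * b) ζ -
      ((2 * (starRingEnd ℂ a + starRingEnd ℂ b * ζ)
        + (α * w ^ 2 + β * w ^ 4 * (2 * ζ))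
          * ((a - starRingEnd ℂ a) * ζ + b - starRingEnd ℂ b * ζ ^ 2)).re
        + τ ^ 2 * ((1 + ζ) ^ 2).re
        + (α * (w ^ 2 - 1) * ζ).re + (β * (w ^ 4 - 1) * ζ ^ 2).re)|
      ≤ 16 * (K * κ) ^ 3 + 8 * (K * κ) ^ 2 * θ + 112 * B * (K * κ) ^ 2 := by
  set y := K * κ with hy
  have hy0 : 0 ≤ y := by positivity
  set h : ℂ := starRingEnd ℂ a + starRingEnd ℂ b * ζ with hh
  set k : ℂ := (a - starRingEnd ℂ a) * ζ + b - starRingEnd ℂ b * ζ ^ 2 with hk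
  have na : ‖starRingEnd ℂ a‖ ≤ y := by rwa [RCLike.norm_conj]
  have nb : ‖starRingEnd ℂ b‖ ≤ y := by rwa [RCLike.norm_conj]
  have nbz : ‖starRingEnd ℂ b * ζ‖ ≤ y := by
    rw [norm_mul]; nlinarith [norm_nonneg ζ, norm_nonneg (starRingEnd ℂ b)]
  have hhn : ‖h‖ ≤ 2 * y := (norm_add_le _ _).trans (by linarith)
  have nz2 : ‖ζ ^ 2‖ ≤ 1 := by rw [norm_pow]; exact pow_le_one₀ (norm_nonneg _) hζ
  have hkn : ‖k‖ ≤ 4 * y := by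
    have h1 : ‖(a - starRingEnd ℂ a) * ζ‖ ≤ 2 * y := by
      rw [norm_mul]
      have := norm_sub_le a (starRingEnd ℂ a)
      nlinarith [norm_nonneg ζ, norm_nonneg (a - starRingEnd ℂ a)]
    have h2 : ‖starRingEnd ℂ b * ζ ^ 2‖ ≤ y := by
      rw [norm_mul]; nlinarith [norm_nonneg (ζ ^ 2), norm_nonneg (starRingEnd ℂ b)]
    have h3 := norm_sub_le ((a - starRingEnd ℂ a) * ζ + b) (starRingEnd ℂ b * ζ ^ 2)
    have h4 := norm_add_le ((a - starRingEnd ℂ a) * ζ) b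
    linarith
  have h1h : 1 / 2 ≤ ‖1 + h‖ := by
    have := norm_sub_norm_le (1 : ℂ) (-h)
    rw [norm_neg, sub_neg_eq_add, norm_one] at this
    linarith
  have h1h0 : (1 + h) ≠ 0 := by
    intro h0; rw [h0, norm_zero] at h1h; linarith
  have hwc : starRingEnd ℂ w * w = 1 := by
    rw [mul_comm, Complex.mul_conj, Complex.normSq_eq_norm_sq, hw]; norm_num
  have hw0 : starRingEnd ℂ w ≠ 0 := left_ne_zero_of_mul_eq_one hwc
  have hden : mden (w * (1 + a)) (w * b) ζ = starRingEnd ℂ w * (1 + h) := by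
    simp only [mden, map_mul, map_add, map_one, hh]; ring
  set r : ℂ := -(k * h / (1 + h)) with hr
  have hmob : mob (w * (1 + a)) (w * b) ζ = w ^ 2 * (ζ + k + r) := by
    rw [mob, hden, div_eq_iff (mul_ne_zero hw0 h1h0)]
    have e1 : r * (1 + h) = -(k * h) := by rw [hr]; field_simp
    have e2 : w ^ 2 * (ζ + k + r) * (starRingEnd ℂ w * (1 + h))
        = (starRingEnd ℂ w * w) * w * ((ζ + k) * (1 + h) + r * (1 + h)) := by ring
    rw [e2, e1, hwc, hk, hh]; ring
  have hrn : ‖r‖ ≤ 16 * y ^ 2 := by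
    rw [hr, norm_neg, norm_div, norm_mul, div_le_iff₀ (by linarith)]
    have : ‖k‖ * ‖h‖ ≤ 4 * y * (2 * y) := by gcongr
    nlinarith [sq_nonneg y]
  have hsq : ‖(k + r) ^ 2 + 2 * ζ * r‖ ≤ 96 * y ^ 2 := by
    have h1 : ‖k + r‖ ≤ 8 * y := (norm_add_le _ _).trans (by nlinarith)
    have h2 : ‖(k + r) ^ 2‖ ≤ (8 * y) ^ 2 := by rw [norm_pow]; gcongr
    have h3 : ‖2 * ζ * r‖ ≤ 2 * 1 * (16 * y ^ 2) := by
      rw [norm_mul, norm_mul, Complex.norm_ofNat]; gcongr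
    refine (norm_add_le _ _).trans ?_
    nlinarith
  have hlog := log_norm_one_add (h := h) (by linarith)
  have hh3 : ‖h‖ ^ 3 ≤ (2 * y) ^ 3 := by gcongr
  have hhsq : ‖h ^ 2 + (τ : ℂ) ^ 2 * (1 + ζ) ^ 2‖ ≤ 8 * y ^ 2 * θ := by
    have e : h ^ 2 + (τ : ℂ) ^ 2 * (1 + ζ) ^ 2
        = (h + Complex.I * τ * (1 + ζ)) * (h - Complex.I * τ * (1 + ζ)) := by
      ring_nf; rw [Complex.I_sq]; ring
    have e2 : h + Complex.I * τ * (1 + ζ)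
        = starRingEnd ℂ (a - Complex.I * τ) + starRingEnd ℂ (b - Complex.I * τ) * ζ := by
      simp only [map_sub, map_mul, Complex.conj_I, Complex.conj_ofReal, hh]; ring
    have h1 : ‖h + Complex.I * τ * (1 + ζ)‖ ≤ 2 * (y * θ) := by
      rw [e2]
      refine (norm_add_le _ _).trans ?_
      rw [norm_mul, RCLike.norm_conj, RCLike.norm_conj]
      nlinarith [norm_nonneg ζ, norm_nonneg (b - Complex.I * τ)]
    have h2 : ‖h - Complex.I * τ * (1 + ζ)‖ ≤ 4 * y := by
      refine (norm_sub_le _ _).trans ?_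
      have h5 : ‖(1 : ℂ) + ζ‖ ≤ 2 := by
        refine (norm_add_le _ _).trans ?_
        rw [norm_one]; linarith
      have : ‖Complex.I * τ * (1 + ζ)‖ ≤ y * 2 := by
        rw [norm_mul, norm_mul, Complex.norm_I, one_mul, Complex.norm_real, Real.norm_eq_abs]
        gcongr
      linarith
    rw [e, norm_mul]
    calc _ ≤ 2 * (y * θ) * (4 * y) := by gcongr
      _ = _ := by ring
  have hw2 : ‖w ^ 2‖ = 1 := by rw [norm_pow, hw]; norm_num
  have hw4 : ‖w ^ 4‖ = 1 := by rw [norm_pow, hw]; norm_num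
  have hB : 0 ≤ B := (norm_nonneg _).trans hα
  have t1 : ‖α * (w ^ 2 * r)‖ ≤ B * (16 * y ^ 2) := by
    rw [norm_mul, norm_mul, hw2, one_mul]; gcongr
  have t2 : ‖β * (w ^ 4 * ((k + r) ^ 2 + 2 * ζ * r))‖ ≤ B * (96 * y ^ 2) := by
    rw [norm_mul, norm_mul, hw4, one_mul]; gcongr
  have key : stepF α β (w * (1 + a)) (w * b) ζ -
      ((2 * h + (α * w ^ 2 + β * w ^ 4 * (2 * ζ)) * k).re
        + τ ^ 2 * ((1 + ζ) ^ 2).re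
        + (α * (w ^ 2 - 1) * ζ).re + (β * (w ^ 4 - 1) * ζ ^ 2).re)
      = 2 * (Real.log ‖1 + h‖ - (h.re - (h ^ 2).re / 2))
        - (h ^ 2 + (τ : ℂ) ^ 2 * (1 + ζ) ^ 2).re
        + (α * (w ^ 2 * r)).re + (β * (w ^ 4 * ((k + r) ^ 2 + 2 * ζ * r))).re := by
    have e0 : (((τ : ℂ) ^ 2 * (1 + ζ) ^ 2)).re = τ ^ 2 * ((1 + ζ) ^ 2).re := by
      rw [← Complex.ofReal_pow, Complex.re_ofReal_mul]
    have e1 : α * (mob (w * (1 + a)) (w * b) ζ - ζ)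
        = α * (w ^ 2 - 1) * ζ + α * w ^ 2 * k + α * (w ^ 2 * r) := by rw [hmob]; ring
    have e2 : β * (mob (w * (1 + a)) (w * b) ζ ^ 2 - ζ ^ 2)
        = β * (w ^ 4 - 1) * ζ ^ 2 + β * w ^ 4 * (2 * ζ) * k
          + β * (w ^ 4 * ((k + r) ^ 2 + 2 * ζ * r)) := by rw [hmob]; ring
    have e3 : (2 * h).re = 2 * h.re := by simp
    rw [stepF, e1, e2, hden, norm_mul, RCLike.norm_conj, hw, one_mul, add_mul]
    simp only [Complex.add_re, e0, e3]
    ring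
  rw [key]
  have r1 := Complex.abs_re_le_norm (h ^ 2 + (τ : ℂ) ^ 2 * (1 + ζ) ^ 2)
  have r2 := Complex.abs_re_le_norm (α * (w ^ 2 * r))
  have r3 := Complex.abs_re_le_norm (β * (w ^ 4 * ((k + r) ^ 2 + 2 * ζ * r)))
  have r1' := abs_le.mp (r1.trans hhsq)
  have r2' := abs_le.mp (r2.trans t1)
  have r3' := abs_le.mp (r3.trans t2)
  have r4' := abs_le.mp (hlog.trans hh3)
  rw [abs_le]
  constructor
  · linarith [r1'.1, r1'.2, r2'.1, r2'.2, r3'.1, r3'.2, r4'.1, r4'.2]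
  · linarith [r1'.1, r1'.2, r2'.1, r2'.2, r3'.1, r3'.2, r4'.1, r4'.2]

/-- Every product of powers of `κ` and `θ` met in the error terms is dominated by `θ³ + κ⁴ / θ`. -/
lemma error_scales {κ θ : ℝ} (hκ : 0 < κ) (hθ : 0 < θ) (hθ1 : θ ≤ 1) :
    κ ^ 3 ≤ θ ^ 3 + κ ^ 4 / θ ∧ κ ^ 2 * θ ≤ θ ^ 3 + κ ^ 4 / θ ∧ κ * θ ^ 2 ≤ θ ^ 3 + κ ^ 4 / θ
      ∧ κ ^ 4 ≤ θ ^ 3 + κ ^ 4 / θ ∧ κ ^ 4 / θ ≤ θ ^ 3 + κ ^ 4 / θ := by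
  have h0 : 0 < κ ^ 4 / θ := by positivity
  have h1 : 0 < θ ^ 3 := by positivity
  have h4 : κ ^ 4 ≤ κ ^ 4 / θ := by
    rw [le_div_iff₀ hθ]; nlinarith [pow_pos hκ 4]
  rcases le_total κ θ with h | h
  · have a1 : κ ^ 3 ≤ θ ^ 3 := by gcongr
    have a2 : κ ^ 2 * θ ≤ θ ^ 2 * θ := by gcongr
    have a3 : κ * θ ^ 2 ≤ θ * θ ^ 2 := by gcongr
    refine ⟨by linarith, by nlinarith, by nlinarith, by linarith, by linarith⟩
  · have a1 : κ ^ 3 ≤ κ ^ 4 / θ := by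
      rw [le_div_iff₀ hθ]; nlinarith [pow_pos hκ 3]
    have a2 : κ ^ 2 * θ ≤ κ ^ 2 * κ := by gcongr
    have a3 : κ * θ ^ 2 ≤ κ * κ ^ 2 := by gcongr
    refine ⟨by linarith, by nlinarith, by nlinarith, by linarith, by linarith⟩

lemma integrable_of_bound {S : Type*} [MeasurableSpace S] {μ : Measure S} [IsFiniteMeasure μ]
    {F : Type*} [NormedAddCommGroup F] [MeasurableSpace F] [BorelSpace F]
    [SecondCountableTopology F] {f : S → F} (hf : Measurable f) (C : ℝ) (hC : ∀ s, ‖f s‖ ≤ C) :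
    Integrable f μ :=
  Integrable.of_bound hf.aestronglyMeasurable C (Eventually.of_forall hC)

lemma abs_integral_sub_le {S : Type*} [MeasurableSpace S] {μ : Measure S} [IsProbabilityMeasure μ]
    {f g : S → ℝ} (hf : Integrable f μ) (hg : Integrable g μ) {e : ℝ}
    (h : ∀ s, |f s - g s| ≤ e) : |(∫ s, f s ∂μ) - ∫ s, g s ∂μ| ≤ e := by
  rw [← integral_sub hf hg]
  have := norm_integral_le_of_norm_le_const (μ := μ) (f := fun s => f s - g s)
    (Eventually.of_forall h)
  simpa using this

lemma measurable_stepF {S : Type*} [MeasurableSpace S] {p q : S → ℂ} (hp : Measurable p)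
    (hq : Measurable q) (α β ζ : ℂ) : Measurable fun s => stepF α β (p s) (q s) ζ := by
  unfold stepF mob mden
  have hc : Measurable (starRingEnd ℂ) := Complex.continuous_conj.measurable
  have h1 := hc.comp hp
  have h2 := hc.comp hq
  simp only [Function.comp_def] at h1 h2
  refine Measurable.add (Measurable.add ?_ ?_) ?_
  · exact ((h1.add (h2.mul_const ζ)).norm.log).const_mul 2
  · exact Complex.measurable_re.comp (((((hp.mul_const ζ).add hq).div
      (h1.add (h2.mul_const ζ))).sub_const ζ).const_mul α)
  · exact Complex.measurable_re.comp ((((((hp.mul_const ζ).add hq).div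
      (h1.add (h2.mul_const ζ))).pow_const 2).sub_const (ζ ^ 2)).const_mul β)

set_option maxHeartbeats 1000000 in
/-- Approximate Poisson equation: with the correctors `α = -2v/(w²-1)` and `β = -v/(w⁴-1)`, which
cancel the terms oscillating with the rotation `w`, the mean increment of the corrected logarithm
equals `v = 𝐄 τ²` up to a uniformly small error. -/
lemma stepF_integral {S : Type*} [MeasurableSpace S] (μ : Measure S) [IsProbabilityMeasure μ]
    {w : ℂ} {a b : S → ℂ} {τ : S → ℝ} {K κ θ : ℝ} (hw : ‖w‖ = 1) (hK : 1 ≤ K) (hκ : 0 < κ)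
    (hθ : 0 < θ) (hθ1 : θ ≤ 1) (hKκ : K * κ ≤ 1 / 4)
    (mea : Measurable a) (meb : Measurable b) (meτ : Measurable τ)
    (ha : ∀ s, ‖a s‖ ≤ K * κ) (hb : ∀ s, ‖b s‖ ≤ K * κ) (hτ : ∀ s, |τ s| ≤ K * κ)
    (haτ : ∀ s, ‖a s - Complex.I * τ s‖ ≤ K * κ * θ)
    (hbτ : ∀ s, ‖b s - Complex.I * τ s‖ ≤ K * κ * θ)
    (hai : ‖∫ s, a s ∂μ‖ ≤ K * (κ ^ 2 * θ + κ * θ ^ 2))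
    (hbi : ‖∫ s, b s ∂μ‖ ≤ K * (κ ^ 2 * θ + κ * θ ^ 2))
    (hw2 : θ ≤ K * ‖w ^ 2 - 1‖) (hw4 : θ ≤ K * ‖w ^ 4 - 1‖)
    {ζ : ℂ} (hζ : ‖ζ‖ ≤ 1) :
    |(∫ s, stepF (-(2 * ((∫ s, τ s ^ 2 ∂μ : ℝ) : ℂ)) / (w ^ 2 - 1))
      (-((∫ s, τ s ^ 2 ∂μ : ℝ) : ℂ) / (w ^ 4 - 1)) (w * (1 + a s)) (w * b s) ζ ∂μ)
      - ∫ s, τ s ^ 2 ∂μ| ≤ 400 * K ^ 5 * (θ ^ 3 + κ ^ 4 / θ) := by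
  have hK0 : 0 ≤ K := by linarith
  set v := ∫ s, τ s ^ 2 ∂μ with hv
  set α : ℂ := -(2 * (v : ℂ)) / (w ^ 2 - 1) with hα
  set β : ℂ := -(v : ℂ) / (w ^ 4 - 1) with hβ
  have n2 : 0 < ‖w ^ 2 - 1‖ := by
    by_contra h
    have : ‖w ^ 2 - 1‖ = 0 := le_antisymm (not_lt.mp h) (norm_nonneg _)
    rw [this] at hw2; linarith
  have n4 : 0 < ‖w ^ 4 - 1‖ := by
    by_contra h
    have : ‖w ^ 4 - 1‖ = 0 := le_antisymm (not_lt.mp h) (norm_nonneg _)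
    rw [this] at hw4; linarith
  have hτ2 : ∀ s, ‖τ s ^ 2‖ ≤ (K * κ) ^ 2 := fun s => by
    rw [norm_pow, Real.norm_eq_abs]
    exact pow_le_pow_left₀ (abs_nonneg _) (hτ s) 2
  have iτ : Integrable (fun s => τ s ^ 2) μ := integrable_of_bound (meτ.pow_const 2) _ hτ2
  have hv0 : 0 ≤ v := integral_nonneg fun s => sq_nonneg _
  have hv1 : v ≤ (K * κ) ^ 2 := by
    have := norm_integral_le_of_norm_le_const (μ := μ) (Eventually.of_forall hτ2)
    simp only [probReal_univ, mul_one] at this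
    exact (le_abs_self _).trans this
  set B : ℝ := 2 * K ^ 3 * (κ ^ 2 / θ) with hB
  have hB0 : 0 ≤ B := by positivity
  have hBθ : B * θ = 2 * K ^ 3 * κ ^ 2 := by rw [hB]; field_simp
  have hαB : ‖α‖ ≤ B := by
    rw [hα, norm_div, norm_neg, norm_mul, Complex.norm_ofNat, Complex.norm_real, Real.norm_eq_abs,
      abs_of_nonneg hv0, div_le_iff₀ n2]
    have : B * θ ≤ B * (K * ‖w ^ 2 - 1‖) := by gcongr
    have h2 : 2 * v * K ≤ 2 * (K * κ) ^ 2 * K := by gcongr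
    have h3 : 2 * v * K ≤ B * ‖w ^ 2 - 1‖ * K := by nlinarith
    exact le_of_mul_le_mul_right h3 (by linarith)
  have hβB : ‖β‖ ≤ B := by
    rw [hβ, norm_div, norm_neg, Complex.norm_real, Real.norm_eq_abs,
      abs_of_nonneg hv0, div_le_iff₀ n4]
    have : B * θ ≤ B * (K * ‖w ^ 4 - 1‖) := by gcongr
    have h2 : 2 * v * K ≤ 2 * (K * κ) ^ 2 * K := by gcongr
    have h3 : v * K ≤ B * ‖w ^ 4 - 1‖ * K := by nlinarith
    exact le_of_mul_le_mul_right h3 (by linarith)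
  set c : ℂ := α * w ^ 2 + β * w ^ 4 * (2 * ζ) with hc
  have hcB : ‖c‖ ≤ 3 * B := by
    refine (norm_add_le _ _).trans ?_
    simp only [norm_mul, norm_pow, hw, one_pow, mul_one, Complex.norm_ofNat]
    nlinarith [norm_nonneg β, norm_nonneg ζ]
  have hcoef : ∀ s, stepF α β (w * (1 + a s)) (w * b s) ζ -
      ((2 * (starRingEnd ℂ (a s) + starRingEnd ℂ (b s) * ζ)
        + c * ((a s - starRingEnd ℂ (a s)) * ζ + b s - starRingEnd ℂ (b s) * ζ ^ 2)).re
        + (τ s ^ 2 * ((1 + ζ) ^ 2).re + ((α * (w ^ 2 - 1) * ζ).re + (β * (w ^ 4 - 1) * ζ ^ 2).re)))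
      = stepF α β (w * (1 + a s)) (w * b s) ζ -
      ((2 * (starRingEnd ℂ (a s) + starRingEnd ℂ (b s) * ζ)
        + c * ((a s - starRingEnd ℂ (a s)) * ζ + b s - starRingEnd ℂ (b s) * ζ ^ 2)).re
        + τ s ^ 2 * ((1 + ζ) ^ 2).re + (α * (w ^ 2 - 1) * ζ).re + (β * (w ^ 4 - 1) * ζ ^ 2).re) :=
    fun s => by ring
  have hpt : ∀ s, |stepF α β (w * (1 + a s)) (w * b s) ζ -
      ((2 * (starRingEnd ℂ (a s) + starRingEnd ℂ (b s) * ζ)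
        + c * ((a s - starRingEnd ℂ (a s)) * ζ + b s - starRingEnd ℂ (b s) * ζ ^ 2)).re
        + (τ s ^ 2 * ((1 + ζ) ^ 2).re + ((α * (w ^ 2 - 1) * ζ).re + (β * (w ^ 4 - 1) * ζ ^ 2).re)))|
      ≤ 16 * (K * κ) ^ 3 + 8 * (K * κ) ^ 2 * θ + 112 * B * (K * κ) ^ 2 := fun s => by
    rw [hcoef s]
    exact stepF_expand hw hK0 hκ.le hθ.le hKκ (ha s) (hb s) (hτ s) (haτ s) (hbτ s) hαB hβB hζ
  have ia : Integrable a μ := integrable_of_bound mea _ ha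
  have ib : Integrable b μ := integrable_of_bound meb _ hb
  have iac : Integrable (fun s => starRingEnd ℂ (a s)) μ :=
    integrable_of_bound (Complex.continuous_conj.measurable.comp mea) (K * κ)
      fun s => by rw [RCLike.norm_conj]; exact ha s
  have ibc : Integrable (fun s => starRingEnd ℂ (b s)) μ :=
    integrable_of_bound (Complex.continuous_conj.measurable.comp meb) (K * κ)
      fun s => by rw [RCLike.norm_conj]; exact hb s
  have hlin : ∀ s, 2 * (starRingEnd ℂ (a s) + starRingEnd ℂ (b s) * ζ)
        + c * ((a s - starRingEnd ℂ (a s)) * ζ + b s - starRingEnd ℂ (b s) * ζ ^ 2)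
      = (2 - c * ζ) * starRingEnd ℂ (a s) + (2 * ζ - c * ζ ^ 2) * starRingEnd ℂ (b s)
        + (c * ζ * a s + c * b s) := fun s => by ring
  have ilin : Integrable (fun s => 2 * (starRingEnd ℂ (a s) + starRingEnd ℂ (b s) * ζ)
        + c * ((a s - starRingEnd ℂ (a s)) * ζ + b s - starRingEnd ℂ (b s) * ζ ^ 2)) μ := by
    simp only [hlin]
    exact ((iac.const_mul _).add (ibc.const_mul _)).add ((ia.const_mul _).add (ib.const_mul _))
  have intlin : (∫ s, 2 * (starRingEnd ℂ (a s) + starRingEnd ℂ (b s) * ζ)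
        + c * ((a s - starRingEnd ℂ (a s)) * ζ + b s - starRingEnd ℂ (b s) * ζ ^ 2) ∂μ)
      = (2 - c * ζ) * starRingEnd ℂ (∫ s, a s ∂μ) + (2 * ζ - c * ζ ^ 2) * starRingEnd ℂ (∫ s, b s ∂μ)
        + (c * ζ * (∫ s, a s ∂μ) + c * ∫ s, b s ∂μ) := by
    simp only [hlin]
    rw [integral_add, integral_add (iac.const_mul _) (ibc.const_mul _),
      integral_add (ia.const_mul _) (ib.const_mul _)]
    · simp only [integral_const_mul, integral_conj]
    · exact (iac.const_mul _).add (ibc.const_mul _)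
    · exact (ia.const_mul _).add (ib.const_mul _)
  set m : ℝ := K * (κ ^ 2 * θ + κ * θ ^ 2) with hm
  have hm0 : 0 ≤ m := by positivity
  have hz2 : ‖ζ‖ ^ 2 ≤ 1 := pow_le_one₀ (norm_nonneg _) hζ
  have nlin : ‖∫ s, 2 * (starRingEnd ℂ (a s) + starRingEnd ℂ (b s) * ζ)
        + c * ((a s - starRingEnd ℂ (a s)) * ζ + b s - starRingEnd ℂ (b s) * ζ ^ 2) ∂μ‖
      ≤ (4 + 12 * B) * m := by
    rw [intlin]
    have hcz : ‖c * ζ‖ ≤ 3 * B := by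
      rw [norm_mul]; nlinarith [norm_nonneg c, norm_nonneg ζ]
    have hcz2 : ‖c * ζ ^ 2‖ ≤ 3 * B := by
      rw [norm_mul, norm_pow]; nlinarith [norm_nonneg c, norm_nonneg ζ]
    have q1 : ‖2 - c * ζ‖ ≤ 2 + 3 * B :=
      (norm_sub_le _ _).trans (by rw [Complex.norm_ofNat]; linarith)
    have q2 : ‖2 * ζ - c * ζ ^ 2‖ ≤ 2 + 3 * B :=
      (norm_sub_le _ _).trans (by rw [norm_mul, Complex.norm_ofNat]; linarith)
    have p1 : ‖(2 - c * ζ) * starRingEnd ℂ (∫ s, a s ∂μ)‖ ≤ (2 + 3 * B) * m := by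
      rw [norm_mul, RCLike.norm_conj]; gcongr
    have p2 : ‖(2 * ζ - c * ζ ^ 2) * starRingEnd ℂ (∫ s, b s ∂μ)‖ ≤ (2 + 3 * B) * m := by
      rw [norm_mul, RCLike.norm_conj]; gcongr
    have p3 : ‖c * ζ * (∫ s, a s ∂μ)‖ ≤ (3 * B) * m := by
      rw [norm_mul]; gcongr
    have p4 : ‖c * (∫ s, b s ∂μ)‖ ≤ (3 * B) * m := by
      rw [norm_mul]; gcongr
    refine (norm_add_le _ _).trans ?_
    have := norm_add_le ((2 - c * ζ) * starRingEnd ℂ (∫ s, a s ∂μ))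
      ((2 * ζ - c * ζ ^ 2) * starRingEnd ℂ (∫ s, b s ∂μ))
    have := norm_add_le (c * ζ * (∫ s, a s ∂μ)) (c * ∫ s, b s ∂μ)
    linarith
  -- the oscillating terms cancel
  have hc1 : (α * (w ^ 2 - 1) * ζ).re = -(2 * v) * ζ.re := by
    rw [hα, div_mul_cancel₀ _ (norm_pos_iff.mp n2)]
    rw [show -(2 * (v : ℂ)) = ((-(2 * v) : ℝ) : ℂ) by push_cast; ring, Complex.re_ofReal_mul]
  have hc2 : (β * (w ^ 4 - 1) * ζ ^ 2).re = -v * (ζ ^ 2).re := by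
    rw [hβ, div_mul_cancel₀ _ (norm_pos_iff.mp n4)]
    rw [show -(v : ℂ) = ((-v : ℝ) : ℂ) by push_cast; ring, Complex.re_ofReal_mul]
  have hc3 : ((1 + ζ) ^ 2).re = 1 + 2 * ζ.re + (ζ ^ 2).re := by
    rw [show (1 + ζ) ^ 2 = 1 + ((2 : ℝ) : ℂ) * ζ + ζ ^ 2 by push_cast; ring, Complex.add_re,
      Complex.add_re, Complex.re_ofReal_mul, Complex.one_re]
  have irest : Integrable (fun s => τ s ^ 2 * ((1 + ζ) ^ 2).re +
      ((α * (w ^ 2 - 1) * ζ).re + (β * (w ^ 4 - 1) * ζ ^ 2).re)) μ :=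
    (iτ.mul_const _).add (integrable_const _)
  have ilin' : Integrable (fun s => (2 * (starRingEnd ℂ (a s) + starRingEnd ℂ (b s) * ζ)
        + c * ((a s - starRingEnd ℂ (a s)) * ζ + b s - starRingEnd ℂ (b s) * ζ ^ 2)).re) μ :=
    ilin.re
  have iF : Integrable (fun s => stepF α β (w * (1 + a s)) (w * b s) ζ) μ := by
    have i0 := ilin'.add irest
    have i1 : Integrable (fun s => stepF α β (w * (1 + a s)) (w * b s) ζ -
      ((2 * (starRingEnd ℂ (a s) + starRingEnd ℂ (b s) * ζ)
        + c * ((a s - starRingEnd ℂ (a s)) * ζ + b s - starRingEnd ℂ (b s) * ζ ^ 2)).re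
        + (τ s ^ 2 * ((1 + ζ) ^ 2).re + ((α * (w ^ 2 - 1) * ζ).re + (β * (w ^ 4 - 1) * ζ ^ 2).re))))
        μ := by
      refine Integrable.of_bound ?_ _ (Eventually.of_forall hpt)
      exact (measurable_stepF ((mea.const_add 1).const_mul w) (meb.const_mul w) α β
        ζ).aestronglyMeasurable.sub i0.aestronglyMeasurable
    refine (i1.add i0).congr (Eventually.of_forall fun s => ?_)
    simp only [Pi.add_apply]; ring
  have main := abs_integral_sub_le iF (ilin'.add irest) hpt
  have hsplit : (∫ s, ((2 * (starRingEnd ℂ (a s) + starRingEnd ℂ (b s) * ζ)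
        + c * ((a s - starRingEnd ℂ (a s)) * ζ + b s - starRingEnd ℂ (b s) * ζ ^ 2)).re
        + (τ s ^ 2 * ((1 + ζ) ^ 2).re +
          ((α * (w ^ 2 - 1) * ζ).re + (β * (w ^ 4 - 1) * ζ ^ 2).re))) ∂μ)
      = (∫ s, 2 * (starRingEnd ℂ (a s) + starRingEnd ℂ (b s) * ζ)
        + c * ((a s - starRingEnd ℂ (a s)) * ζ + b s - starRingEnd ℂ (b s) * ζ ^ 2) ∂μ).re + v := by
    rw [integral_add ilin' irest, integral_add (iτ.mul_const _) (integrable_const _),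
      integral_mul_const, integral_const, ← hv, hc1, hc2, hc3]
    have : (∫ s, (2 * (starRingEnd ℂ (a s) + starRingEnd ℂ (b s) * ζ)
        + c * ((a s - starRingEnd ℂ (a s)) * ζ + b s - starRingEnd ℂ (b s) * ζ ^ 2)).re ∂μ)
        = (∫ s, 2 * (starRingEnd ℂ (a s) + starRingEnd ℂ (b s) * ζ)
        + c * ((a s - starRingEnd ℂ (a s)) * ζ + b s - starRingEnd ℂ (b s) * ζ ^ 2) ∂μ).re :=
      integral_re ilin
    rw [this]
    simp only [probReal_univ, one_smul]
    ring
  simp only [Pi.add_apply] at main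
  rw [hsplit] at main
  have hre := (Complex.abs_re_le_norm _).trans nlin
  set R := (∫ s, 2 * (starRingEnd ℂ (a s) + starRingEnd ℂ (b s) * ζ)
        + c * ((a s - starRingEnd ℂ (a s)) * ζ + b s - starRingEnd ℂ (b s) * ζ ^ 2) ∂μ).re
  set I := ∫ s, stepF α β (w * (1 + a s)) (w * b s) ζ ∂μ
  have tot : |I - v| ≤ 16 * (K * κ) ^ 3 + 8 * (K * κ) ^ 2 * θ + 112 * B * (K * κ) ^ 2
      + (4 + 12 * B) * m := by
    rw [abs_le] at *
    constructor <;> linarith [main.1, main.2, hre.1, hre.2]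
  refine tot.trans ?_
  obtain ⟨s1, s2, s3, s4, s5⟩ := error_scales hκ hθ hθ1
  set E := θ ^ 3 + κ ^ 4 / θ
  have hE : 0 ≤ E := by positivity
  have b1 : B * κ ^ 2 = 2 * K ^ 3 * (κ ^ 4 / θ) := by rw [hB]; ring
  have b2 : B * (κ ^ 2 * θ + κ * θ ^ 2) = 2 * K ^ 3 * (κ ^ 4 + κ ^ 3 * θ) := by
    rw [hB]; field_simp
  have s6 : κ ^ 3 * θ ≤ E := le_trans (by nlinarith [pow_pos hκ 3]) s1
  have k1 : K ≤ K ^ 5 := le_self_pow₀ hK (by norm_num)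
  have k2 : K ^ 2 ≤ K ^ 5 := pow_le_pow_right₀ hK (by norm_num)
  have k3 : K ^ 3 ≤ K ^ 5 := pow_le_pow_right₀ hK (by norm_num)
  have k4 : K ^ 4 ≤ K ^ 5 := pow_le_pow_right₀ hK (by norm_num)
  calc 16 * (K * κ) ^ 3 + 8 * (K * κ) ^ 2 * θ + 112 * B * (K * κ) ^ 2 + (4 + 12 * B) * m
      = 16 * (K ^ 3 * κ ^ 3) + 8 * (K ^ 2 * (κ ^ 2 * θ)) + 112 * (K ^ 2 * (B * κ ^ 2))
        + 4 * (K * (κ ^ 2 * θ + κ * θ ^ 2)) + 12 * (K * (B * (κ ^ 2 * θ + κ * θ ^ 2))) := by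
        rw [hm]; ring
    _ = 16 * (K ^ 3 * κ ^ 3) + 8 * (K ^ 2 * (κ ^ 2 * θ)) + 224 * (K ^ 5 * (κ ^ 4 / θ))
        + 4 * (K * (κ ^ 2 * θ + κ * θ ^ 2)) + 24 * (K ^ 4 * (κ ^ 4 + κ ^ 3 * θ)) := by
        rw [b1, b2]; ring
    _ ≤ 16 * (K ^ 5 * E) + 8 * (K ^ 5 * E) + 224 * (K ^ 5 * E) + 4 * (K ^ 5 * (E + E))
        + 24 * (K ^ 5 * (E + E)) := by gcongr
    _ ≤ 400 * K ^ 5 * E := by nlinarith [mul_nonneg (pow_nonneg hK0 5) hE]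

/-! ### Products of i.i.d. matrices -/

/-- The ordered product `T (ω 0) * T (ω 1) * ⋯ * T (ω (n - 1))`. -/
noncomputable def prodT {S : Type*} (T : S → Matrix (Fin 2) (Fin 2) ℝ) (n : ℕ) (ω : Fin n → S) :
    Matrix (Fin 2) (Fin 2) ℝ :=
  (List.ofFn fun i : Fin n => T (ω i)).prod

section Products

variable {S : Type*} {T : S → Matrix (Fin 2) (Fin 2) ℝ}

lemma prodT_succ (n : ℕ) (ω : Fin (n + 1) → S) :
    prodT T (n + 1) ω = T (ω 0) * prodT T n (fun i => ω i.succ) := by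
  simp [prodT, List.ofFn_succ]

lemma prodT_add (m n : ℕ) (ω : Fin (m + n) → S) :
    prodT T (m + n) ω
      = prodT T m (fun i => ω (i.castLE (Nat.le_add_right m n)))
        * prodT T n (fun i => ω (i.natAdd m)) := by
  simp [prodT, List.ofFn_add]

lemma prodT_det (hdet : ∀ s, (T s).det = 1) (n : ℕ) (ω : Fin n → S) : (prodT T n ω).det = 1 := by
  induction n with
  | zero => simp [prodT]
  | succ n ih => rw [prodT_succ, Matrix.det_mul, hdet, ih, one_mul]

lemma matNorm_prodT_le {K : ℝ} (hK : 1 ≤ K) (hT : ∀ s, matNorm (T s) ≤ K) (n : ℕ) (ω : Fin n → S) :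
    matNorm (prodT T n ω) ≤ 2 * K ^ n := by
  induction n with
  | zero =>
    simp only [prodT, List.ofFn_zero, List.prod_nil, pow_zero, mul_one]
    apply le_of_sq_le_sq _ (by norm_num)
    rw [matNorm_sq]; norm_num [Matrix.one_apply]
  | succ n ih =>
    rw [prodT_succ]
    refine (matNorm_mul_le _ _).trans ?_
    calc matNorm (T (ω 0)) * matNorm (prodT T n fun i => ω i.succ) ≤ K * (2 * K ^ n) :=
          mul_le_mul (hT _) (ih _) (matNorm_nonneg _) (by linarith)
      _ = 2 * K ^ (n + 1) := by ring

variable [MeasurableSpace S]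

lemma measurable_prodT (hT : ∀ i j, Measurable fun s => T s i j) (n : ℕ) (i j : Fin 2) :
    Measurable fun ω : Fin n → S => prodT T n ω i j := by
  induction n generalizing i j with
  | zero => simp only [prodT, List.ofFn_zero]; exact measurable_const
  | succ n ih =>
    simp only [prodT_succ, Matrix.mul_apply, Fin.sum_univ_two]
    have h0 : ∀ i j, Measurable fun ω : Fin (n + 1) → S => T (ω 0) i j := fun i j =>
      (hT i j).comp (measurable_pi_apply 0)
    have h1 : ∀ i j, Measurable fun ω : Fin (n + 1) → S => prodT T n (fun k => ω k.succ) i j :=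
      fun i j => (ih i j).comp (measurable_pi_lambda _ fun k => measurable_pi_apply k.succ)
    exact ((h0 _ _).mul (h1 _ _)).add ((h0 _ _).mul (h1 _ _))

end Products

lemma measurable_matNorm {X : Type*} [MeasurableSpace X] {m : X → Matrix (Fin 2) (Fin 2) ℝ}
    (hm : ∀ i j, Measurable fun s => m s i j) : Measurable fun s => matNorm (m s) := by
  unfold matNorm
  exact (Finset.measurable_fun_sum _ fun i _ =>
    Finset.measurable_fun_sum _ fun j _ => (hm i j).pow_const 2).sqrt

lemma measurable_complex_mk {X : Type*} [MeasurableSpace X] {f g : X → ℝ} (hf : Measurable f)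
    (hg : Measurable g) : Measurable fun s => (⟨f s, g s⟩ : ℂ) := by
  have : (fun s => (⟨f s, g s⟩ : ℂ)) = fun s => (f s : ℂ) + (g s : ℂ) * Complex.I := by
    funext s; exact Complex.mk_eq_add_mul_I _ _
  rw [this]
  exact (Complex.measurable_ofReal.comp hf).add ((Complex.measurable_ofReal.comp hg).mul_const _)

lemma measurable_cA {X : Type*} [MeasurableSpace X] {m : X → Matrix (Fin 2) (Fin 2) ℝ}
    (hm : ∀ i j, Measurable fun s => m s i j) : Measurable fun s => cA (m s) :=
  measurable_complex_mk (((hm 0 0).add (hm 1 1)).div_const 2) (((hm 1 0).sub (hm 0 1)).div_const 2)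

lemma measurable_cB {X : Type*} [MeasurableSpace X] {m : X → Matrix (Fin 2) (Fin 2) ℝ}
    (hm : ∀ i j, Measurable fun s => m s i j) : Measurable fun s => cB (m s) :=
  measurable_complex_mk (((hm 0 0).sub (hm 1 1)).div_const 2) (((hm 1 0).add (hm 0 1)).div_const 2)

lemma measurable_matMul {X : Type*} [MeasurableSpace X] {m n : X → Matrix (Fin 2) (Fin 2) ℝ}
    (hm : ∀ i j, Measurable fun s => m s i j) (hn : ∀ i j, Measurable fun s => n s i j)
    (i j : Fin 2) : Measurable fun s => (m s * n s) i j := by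
  simp only [Matrix.mul_apply, Fin.sum_univ_two]
  exact ((hm _ _).mul (hn _ _)).add ((hm _ _).mul (hn _ _))

/-- The point `B / conj A` of the unit disc attached to a real matrix. -/
noncomputable def zet (m : Matrix (Fin 2) (Fin 2) ℝ) : ℂ := cB m / starRingEnd ℂ (cA m)

/-- The corrected logarithm `log |A|² + Re (α ζ + β ζ²)`. -/
noncomputable def Phi (α β : ℂ) (m : Matrix (Fin 2) (Fin 2) ℝ) : ℝ :=
  2 * Real.log ‖cA m‖ + (α * zet m).re + (β * zet m ^ 2).re

lemma norm_zet_le {m : Matrix (Fin 2) (Fin 2) ℝ} (h : m.det = 1) : ‖zet m‖ ≤ 1 := by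
  have h1 := one_le_norm_cA h
  rw [zet, norm_div, RCLike.norm_conj, div_le_one (by linarith)]
  exact norm_cB_le h

/-- Left multiplication by `m` acts on the disc coordinate as one Möbius step. -/
lemma Phi_mul (α β : ℂ) {m n : Matrix (Fin 2) (Fin 2) ℝ} (hm : m.det = 1) (hn : n.det = 1) :
    Phi α β (m * n) = Phi α β n + stepF α β (cA m) (cB m) (zet n) := by
  have hmn : (m * n).det = 1 := by rw [Matrix.det_mul, hm, hn, one_mul]
  have hn0 : cA n ≠ 0 := by
    have := one_le_norm_cA hn
    rw [← norm_pos_iff]; linarith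
  have hnc : starRingEnd ℂ (cA n) ≠ 0 := (map_ne_zero _).mpr hn0
  have hmn0 : cA (m * n) ≠ 0 := by
    have := one_le_norm_cA hmn
    rw [← norm_pos_iff]; linarith
  have e1 : starRingEnd ℂ (cA (m * n)) = starRingEnd ℂ (cA n) * mden (cA m) (cB m) (zet n) := by
    rw [cA_mul, mden, zet]
    simp only [map_add, map_mul, Complex.conj_conj]
    field_simp
  have hd : mden (cA m) (cB m) (zet n) ≠ 0 := by
    intro h
    rw [h, mul_zero, map_eq_zero] at e1
    exact hmn0 e1
  have e2 : ‖cA (m * n)‖ = ‖cA n‖ * ‖mden (cA m) (cB m) (zet n)‖ := by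
    rw [← RCLike.norm_conj, e1, norm_mul, RCLike.norm_conj]
  have e3 : zet (m * n) = mob (cA m) (cB m) (zet n) := by
    rw [zet, e1, mob, cB_mul, div_eq_div_iff (mul_ne_zero hnc hd) hd, zet]
    field_simp
  rw [Phi, Phi, stepF, e2, e3, Real.log_mul (norm_ne_zero_iff.mpr hn0) (norm_ne_zero_iff.mpr hd)]
  simp only [mul_sub, Complex.sub_re]
  ring

lemma abs_Phi_sub_le (α β : ℂ) {m : Matrix (Fin 2) (Fin 2) ℝ} (h : m.det = 1) :
    |Phi α β m - 2 * Real.log ‖cA m‖| ≤ ‖α‖ + ‖β‖ := by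
  have hz := norm_zet_le h
  have h1 : |(α * zet m).re| ≤ ‖α‖ := by
    refine (Complex.abs_re_le_norm _).trans ?_
    rw [norm_mul]; exact mul_le_of_le_one_right (norm_nonneg _) hz
  have h2 : |(β * zet m ^ 2).re| ≤ ‖β‖ := by
    refine (Complex.abs_re_le_norm _).trans ?_
    rw [norm_mul, norm_pow]
    exact mul_le_of_le_one_right (norm_nonneg _) (pow_le_one₀ (norm_nonneg _) hz)
  rw [show Phi α β m - 2 * Real.log ‖cA m‖ = (α * zet m).re + (β * zet m ^ 2).re by
    rw [Phi]; ring]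
  exact (abs_add_le _ _).trans (add_le_add h1 h2)

lemma measurable_Phi {X : Type*} [MeasurableSpace X] (α β : ℂ)
    {m : X → Matrix (Fin 2) (Fin 2) ℝ}
    (hm : ∀ i j, Measurable fun s => m s i j) : Measurable fun s => Phi α β (m s) := by
  have h1 := measurable_cA hm
  have h2 := measurable_cB hm
  have hz : Measurable fun s => zet (m s) :=
    h2.div (Complex.continuous_conj.measurable.comp h1)
  unfold Phi
  exact ((h1.norm.log.const_mul 2).add (Complex.measurable_re.comp (hz.const_mul α))).add
    (Complex.measurable_re.comp ((hz.pow_const 2).const_mul β))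

/-- Conjugation changes the logarithm of the norm by a bounded amount. -/
lemma abs_log_sub_le (M N : Matrix (Fin 2) (Fin 2) ℝ) (hNM : N * M = 1) :
    ∃ C : ℝ, ∀ P : Matrix (Fin 2) (Fin 2) ℝ, P.det = 1 →
      |Real.log (matNorm P) - Real.log ‖cA (M * P * N)‖| ≤ C := by
  set c : ℝ := 1 + matNorm M * matNorm N with hc
  have hc0 : 0 ≤ matNorm M * matNorm N := mul_nonneg (matNorm_nonneg _) (matNorm_nonneg _)
  refine ⟨Real.log (2 * c), fun P hP => ?_⟩
  have hX : (M * P * N).det = 1 := by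
    rw [Matrix.det_mul, Matrix.det_mul, hP, mul_one, mul_comm, ← Matrix.det_mul, hNM,
      Matrix.det_one]
  have e : P = N * (M * P * N) * M := by
    calc P = (N * M) * P * (N * M) := by rw [hNM, one_mul, mul_one]
      _ = _ := by simp only [mul_assoc]
  have hP1 := one_le_matNorm hP
  have hX1 := one_le_norm_cA hX
  have b1 : matNorm P ≤ 2 * c * ‖cA (M * P * N)‖ := by
    have h1 : matNorm P ≤ matNorm N * matNorm (M * P * N) * matNorm M := by
      conv_lhs => rw [e]
      refine (matNorm_mul_le _ _).trans ?_
      exact mul_le_mul_of_nonneg_right (matNorm_mul_le _ _) (matNorm_nonneg _)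
    have h2 := matNorm_le hX
    have h3 : matNorm M * matNorm N * matNorm (M * P * N)
        ≤ matNorm M * matNorm N * (2 * ‖cA (M * P * N)‖) := by gcongr
    nlinarith
  have b2 : ‖cA (M * P * N)‖ ≤ 2 * c * matNorm P := by
    have h1 : matNorm (M * P * N) ≤ matNorm M * matNorm P * matNorm N :=
      (matNorm_mul_le _ _).trans
        (mul_le_mul_of_nonneg_right (matNorm_mul_le _ _) (matNorm_nonneg _))
    have h2 := norm_cA_le (M * P * N)
    nlinarith
  have l1 := Real.log_le_log (by linarith) b1
  have l2 := Real.log_le_log (by linarith) b2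
  rw [Real.log_mul (by positivity) (by linarith)] at l1 l2
  rw [abs_le]; constructor <;> linarith

section Iteration

variable {S : Type*} [MeasurableSpace S] (μ : Measure S) [IsProbabilityMeasure μ]
  {T : S → Matrix (Fin 2) (Fin 2) ℝ}

lemma measurePreserving_pi_comp {m n : ℕ} (g : Fin m → Fin n) (hg : Function.Injective g) :
    MeasurePreserving (fun (ω : Fin n → S) (i : Fin m) => ω (g i))
      (Measure.pi fun _ => μ) (Measure.pi fun _ => μ) := by
  refine ⟨measurable_pi_lambda _ fun i => measurable_pi_apply (g i), ?_⟩
  have h := (ProbabilityTheory.iIndepFun_pi (μ := fun _ : Fin n => μ) (X := fun _ s => s)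
    (fun _ => aemeasurable_id)).precomp hg
  have h2 := (ProbabilityTheory.iIndepFun_iff_map_fun_eq_pi_map
    (fun i => (measurable_pi_apply (g i)).aemeasurable)).mp h
  rw [h2]
  congr 1
  funext i
  exact (measurePreserving_eval (fun _ : Fin n => μ) (g i)).map_eq

lemma integrable_log_matNorm {K : ℝ} (hK : 1 ≤ K) (hTm : ∀ i j, Measurable fun s => T s i j)
    (hT : ∀ s, matNorm (T s) ≤ K) (hdet : ∀ s, (T s).det = 1) (n : ℕ) :
    Integrable (fun ω => Real.log (matNorm (prodT T n ω))) (Measure.pi fun _ : Fin n => μ) := by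
  refine integrable_of_bound (measurable_matNorm (measurable_prodT hTm n)).log
    (Real.log (2 * K ^ n)) fun ω => ?_
  have h1 := one_le_matNorm (prodT_det hdet n ω)
  rw [Real.norm_eq_abs, abs_of_nonneg (Real.log_nonneg h1)]
  exact Real.log_le_log (by linarith) (matNorm_prodT_le hK hT n ω)

/-- Existence of the Lyapunov exponent, by subadditivity. -/
lemma exists_lyapunov {K : ℝ} (hK : 1 ≤ K) (hTm : ∀ i j, Measurable fun s => T s i j)
    (hT : ∀ s, matNorm (T s) ≤ K) (hdet : ∀ s, (T s).det = 1) :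
    ∃ g : ℝ, Tendsto (fun n : ℕ =>
      (∫ ω, Real.log (matNorm (prodT T n ω)) ∂(Measure.pi fun _ : Fin n => μ)) / n)
      atTop (nhds g) := by
  have hLogInt := integrable_log_matNorm μ hK hTm hT hdet
  have hsub : Subadditive fun n : ℕ =>
      ∫ ω, Real.log (matNorm (prodT T n ω)) ∂(Measure.pi fun _ : Fin n => μ) := by
    intro m n
    have p1 := measurePreserving_pi_comp μ
      (fun i : Fin m => i.castLE (Nat.le_add_right m n)) (Fin.castLE_injective _)
    have p2 := measurePreserving_pi_comp μ (fun i : Fin n => i.natAdd m)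
      (Fin.natAdd_injective _ _)
    have i1 : Integrable (fun ω : Fin (m + n) → S => Real.log (matNorm (prodT T m
        fun i => ω (i.castLE (Nat.le_add_right m n))))) (Measure.pi fun _ => μ) :=
      p1.integrable_comp_of_integrable (hLogInt m)
    have i2 : Integrable (fun ω : Fin (m + n) → S => Real.log (matNorm (prodT T n
        fun i => ω (i.natAdd m)))) (Measure.pi fun _ => μ) :=
      p2.integrable_comp_of_integrable (hLogInt n)
    have e1 := integral_map p1.measurable.aemeasurable
      (f := fun ω => Real.log (matNorm (prodT T m ω)))
      (by rw [p1.map_eq]; exact (hLogInt m).aestronglyMeasurable)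
    have e2 := integral_map p2.measurable.aemeasurable
      (f := fun ω => Real.log (matNorm (prodT T n ω)))
      (by rw [p2.map_eq]; exact (hLogInt n).aestronglyMeasurable)
    rw [p1.map_eq] at e1
    rw [p2.map_eq] at e2
    simp only
    rw [e1, e2, ← integral_add i1 i2]
    refine integral_mono (hLogInt (m + n)) (i1.add i2) fun ω => ?_
    have q1 := one_le_matNorm (prodT_det hdet m fun i => ω (i.castLE (Nat.le_add_right m n)))
    have q2 := one_le_matNorm (prodT_det hdet n fun i => ω (i.natAdd m))
    have q3 := one_le_matNorm (prodT_det hdet (m + n) ω)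
    simp only
    rw [← Real.log_mul (by linarith) (by linarith)]
    refine Real.log_le_log (by linarith) ?_
    rw [prodT_add]
    exact matNorm_mul_le _ _
  refine ⟨hsub.lim, hsub.tendsto_lim ⟨0, ?_⟩⟩
  rintro _ ⟨n, rfl⟩
  exact div_nonneg (integral_nonneg fun ω =>
    Real.log_nonneg (one_le_matNorm (prodT_det hdet n ω))) (Nat.cast_nonneg _)

/-- If the mean increment of the corrected logarithm is uniformly within `err` of `v`, then after
`n` steps its expectation is within `n * err` of `n * v`. -/
lemma abs_integral_Phi_le {K : ℝ} (hK : 1 ≤ K) (hTm : ∀ i j, Measurable fun s => T s i j)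
    (hT : ∀ s, matNorm (T s) ≤ K) (hdet : ∀ s, (T s).det = 1)
    (M N : Matrix (Fin 2) (Fin 2) ℝ) (hNM : N * M = 1) (α β : ℂ) (v err : ℝ)
    (hstep : ∀ ζ : ℂ, ‖ζ‖ ≤ 1 →
      |(∫ s, stepF α β (cA (M * T s * N)) (cB (M * T s * N)) ζ ∂μ) - v| ≤ err) (n : ℕ) :
    Integrable (fun ω => Phi α β (M * prodT T n ω * N)) (Measure.pi fun _ : Fin n => μ) ∧
    |(∫ ω, Phi α β (M * prodT T n ω * N) ∂(Measure.pi fun _ : Fin n => μ)) - n * v|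
      ≤ n * err := by
  have hMN : M * N = 1 := mul_eq_one_comm.mp hNM
  have hconj : ∀ P : Matrix (Fin 2) (Fin 2) ℝ, P.det = 1 → (M * P * N).det = 1 := fun P hP => by
    rw [Matrix.det_mul, Matrix.det_mul, hP, mul_one, mul_comm, ← Matrix.det_mul, hNM,
      Matrix.det_one]
  have hmeas : ∀ n, Measurable fun ω : Fin n → S => Phi α β (M * prodT T n ω * N) := fun n =>
    measurable_Phi α β fun i j => measurable_matMul (m := fun ω => M * prodT T n ω)
      (n := fun _ => N) (fun i j => measurable_matMul (m := fun _ => M) (fun _ _ => measurable_const) (measurable_prodT hTm n) i j)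
      (fun _ _ => measurable_const) i j
  obtain ⟨C, hC⟩ := abs_log_sub_le M N hNM
  have hLogInt : ∀ n, Integrable (fun ω => Phi α β (M * prodT T n ω * N))
      (Measure.pi fun _ : Fin n => μ) := fun n => by
    refine integrable_of_bound (hmeas n)
      (‖α‖ + ‖β‖ + 2 * C + 2 * Real.log (2 * K ^ n)) fun ω => ?_
    have hd := prodT_det hdet n ω
    have h1 := abs_Phi_sub_le α β (hconj _ hd)
    have h2 := hC _ hd
    have h3 := Real.log_nonneg (one_le_matNorm hd)
    have h4 := Real.log_le_log (by linarith [one_le_matNorm hd]) (matNorm_prodT_le hK hT n ω)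
    rw [Real.norm_eq_abs]
    rw [abs_le] at *
    constructor <;> linarith [h1.1, h1.2, h2.1, h2.2]
  refine ⟨hLogInt n, ?_⟩
  induction n with
  | zero =>
    have : ∀ ω : Fin 0 → S, Phi α β (M * prodT T 0 ω * N) = 0 := fun ω => by
      have e1 : cA 1 = 1 := by apply Complex.ext <;> norm_num [cA]
      have e2 : cB 1 = 0 := by apply Complex.ext <;> norm_num [cB]
      simp [prodT, hMN, Phi, zet, e1, e2]
    simp [this]
  | succ n ih =>
    have mp := measurePreserving_piFinSuccAbove (fun _ : Fin (n + 1) => μ) 0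
    have hfun : ∀ ω : Fin (n + 1) → S, Phi α β (M * prodT T (n + 1) ω * N)
        = (fun z : S × (Fin n → S) => Phi α β (M * (T z.1 * prodT T n z.2) * N))
          (MeasurableEquiv.piFinSuccAbove (fun _ => S) 0 ω) := fun ω => by
      rw [prodT_succ]; rfl
    have hi2 : Integrable (fun z : S × (Fin n → S) => Phi α β (M * (T z.1 * prodT T n z.2) * N))
        (μ.prod (Measure.pi fun _ : Fin n => μ)) := by
      have := hLogInt (n + 1)
      simp only [hfun] at this
      exact (mp.integrable_comp_emb (MeasurableEquiv.measurableEmbedding _)).mp this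
    have hI : (∫ ω, Phi α β (M * prodT T (n + 1) ω * N) ∂(Measure.pi fun _ : Fin (n + 1) => μ))
        = ∫ ω', (∫ s, Phi α β (M * (T s * prodT T n ω') * N) ∂μ)
          ∂(Measure.pi fun _ : Fin n => μ) := by
      simp only [hfun]
      rw [mp.integral_comp' (g := fun z : S × (Fin n → S) =>
        Phi α β (M * (T z.1 * prodT T n z.2) * N))]
      exact integral_prod_symm _ hi2
    have hin : ∀ ω' : Fin n → S,
        |(∫ s, Phi α β (M * (T s * prodT T n ω') * N) ∂μ)
          - (Phi α β (M * prodT T n ω' * N) + v)| ≤ err := fun ω' => by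
      have hd := hconj _ (prodT_det hdet n ω')
      have e : ∀ s, Phi α β (M * (T s * prodT T n ω') * N)
          = Phi α β (M * prodT T n ω' * N)
            + stepF α β (cA (M * T s * N)) (cB (M * T s * N)) (zet (M * prodT T n ω' * N)) := by
        intro s
        rw [← Phi_mul α β (hconj _ (hdet s)) hd]
        congr 1
        calc M * (T s * prodT T n ω') * N = M * T s * (1 * prodT T n ω') * N := by
              rw [one_mul]; simp only [mul_assoc]
          _ = _ := by rw [← hNM]; simp only [mul_assoc]
      have hs := hstep _ (norm_zet_le hd)
      have hi : Integrable (fun s => stepF α β (cA (M * T s * N)) (cB (M * T s * N))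
          (zet (M * prodT T n ω' * N))) μ := by
        have hmX : ∀ i j, Measurable fun s => (M * T s * N) i j := fun i j =>
          measurable_matMul (m := fun s => M * T s) (n := fun _ => N)
            (fun i j => measurable_matMul (m := fun _ => M) (fun _ _ => measurable_const) hTm i j)
            (fun _ _ => measurable_const) i j
        refine integrable_of_bound (measurable_stepF (measurable_cA hmX) (measurable_cB hmX) _ _ _)
          (‖α‖ + ‖β‖ + 2 * C + 2 * Real.log (K * (2 * K ^ n)) + |Phi α β (M * prodT T n ω' * N)|)
          fun s => ?_
        have h0 := e s
        have hd' : (T s * prodT T n ω').det = 1 := by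
          rw [Matrix.det_mul, hdet, prodT_det hdet, one_mul]
        have h1 := abs_Phi_sub_le α β (hconj _ hd')
        have h2 := hC _ hd'
        have h3 := Real.log_nonneg (one_le_matNorm hd')
        have h4 := Real.log_le_log (by linarith [one_le_matNorm hd'])
          ((matNorm_mul_le (T s) (prodT T n ω')).trans
            (mul_le_mul (hT s) (matNorm_prodT_le hK hT n ω') (matNorm_nonneg _) (by linarith)))
        have h5 := neg_abs_le (Phi α β (M * prodT T n ω' * N))
        have h6 := le_abs_self (Phi α β (M * prodT T n ω' * N))
        rw [Real.norm_eq_abs]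
        rw [abs_le] at h1 h2 ⊢
        constructor <;> linarith [h1.1, h1.2, h2.1, h2.2]
      simp only [e]
      rw [integral_add (integrable_const _) hi, integral_const]
      simp only [probReal_univ, one_smul]
      rwa [add_sub_add_left_eq_sub]
    have hi3 : Integrable (fun ω' => Phi α β (M * prodT T n ω' * N) + v)
      (Measure.pi fun _ : Fin n => μ) := (hLogInt n).add (integrable_const v)
    have h1 := abs_integral_sub_le hi2.integral_prod_right hi3 hin
    rw [integral_add (hLogInt n) (integrable_const v), integral_const] at h1
    simp only [probReal_univ, one_smul] at h1
    rw [hI]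
    push_cast
    rw [abs_le] at *
    constructor <;> linarith [h1.1, h1.2, ih.1, ih.2]

/-- If, after conjugation by `M`, the mean increment of the corrected logarithm is within `err` of `v`
uniformly over the closed disc, then the Lyapunov exponent exists and is within `err / 2` of `v / 2`.
The halves come from `stepF` measuring `log |A|²`. -/
lemma lyapunov_of_step {K : ℝ} (hK : 1 ≤ K) (hTm : ∀ i j, Measurable fun s => T s i j)
    (hT : ∀ s, matNorm (T s) ≤ K) (hdet : ∀ s, (T s).det = 1)
    (M N : Matrix (Fin 2) (Fin 2) ℝ) (hNM : N * M = 1) (α β : ℂ) (v err : ℝ)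
    (hstep : ∀ ζ : ℂ, ‖ζ‖ ≤ 1 →
      |(∫ s, stepF α β (cA (M * T s * N)) (cB (M * T s * N)) ζ ∂μ) - v| ≤ err) :
    ∃ g : ℝ, Tendsto (fun n : ℕ =>
      (∫ ω, Real.log (matNorm (prodT T n ω)) ∂(Measure.pi fun _ : Fin n => μ)) / n)
      atTop (nhds g) ∧ |g - v / 2| ≤ err / 2 := by
  obtain ⟨g, hg⟩ := exists_lyapunov μ hK hTm hT hdet
  refine ⟨g, hg, ?_⟩
  obtain ⟨C, hC⟩ := abs_log_sub_le M N hNM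
  have hconj : ∀ P : Matrix (Fin 2) (Fin 2) ℝ, P.det = 1 → (M * P * N).det = 1 := fun P hP => by
    rw [Matrix.det_mul, Matrix.det_mul, hP, mul_one, mul_comm, ← Matrix.det_mul, hNM,
      Matrix.det_one]
  have hbound : ∀ n : ℕ,
      |2 * (∫ ω, Real.log (matNorm (prodT T n ω)) ∂(Measure.pi fun _ : Fin n => μ)) - n * v|
        ≤ n * err + (‖α‖ + ‖β‖ + 2 * C) := fun n => by
    obtain ⟨h1, h2⟩ := abs_integral_Phi_le μ hK hTm hT hdet M N hNM α β v err hstep n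
    have h3 := abs_integral_sub_le ((integrable_log_matNorm μ hK hTm hT hdet n).const_mul 2) h1
      (e := ‖α‖ + ‖β‖ + 2 * C) fun ω => by
        have hd := prodT_det hdet n ω
        have h4 := abs_Phi_sub_le α β (hconj _ hd)
        have h5 := hC _ hd
        rw [abs_le] at *
        constructor <;> linarith [h4.1, h4.2, h5.1, h5.2]
    rw [integral_const_mul] at h3
    rw [abs_le] at *
    constructor <;> linarith [h2.1, h2.2, h3.1, h3.2]
  have lim1 : Tendsto (fun n : ℕ => |2 * ((∫ ω, Real.log (matNorm (prodT T n ω))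
      ∂(Measure.pi fun _ : Fin n => μ)) / n) - v|) atTop (nhds |2 * g - v|) :=
    ((hg.const_mul 2).sub_const v).abs
  have lim2 : Tendsto (fun n : ℕ => err + (‖α‖ + ‖β‖ + 2 * C) / (n : ℝ)) atTop
      (nhds (err + 0)) :=
    tendsto_const_nhds.add (tendsto_const_div_atTop_nhds_zero_nat _)
  have hle := le_of_tendsto_of_tendsto lim1 lim2 (by
    filter_upwards [eventually_gt_atTop 0] with n hn
    have hn' : (0 : ℝ) < n := by exact_mod_cast hn
    have h := hbound n
    set A := ∫ ω, Real.log (matNorm (prodT T n ω)) ∂(Measure.pi fun _ : Fin n => μ)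
    have e1 : 2 * (A / n) - v = (2 * A - n * v) / n := by field_simp
    have e2 : err + (‖α‖ + ‖β‖ + 2 * C) / (n : ℝ) = (n * err + (‖α‖ + ‖β‖ + 2 * C)) / n := by
      field_simp
    rw [e1, e2, abs_div, abs_of_pos hn']
    exact div_le_div_of_nonneg_right h hn'.le)
  rw [add_zero] at hle
  rw [show g - v / 2 = (2 * g - v) / 2 by ring, abs_div, abs_two]
  exact div_le_div_of_nonneg_right hle (by norm_num)

end Iteration

/-! ### First-order expansions, uniform in the disorder -/

section Expansion

open Asymptotics

/-- The filter `lam → 0`, `e → 0`, uniformly in the disorder variable. -/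
abbrev unif (S : Type*) : Filter (ℝ × ℝ × S) := nhds 0 ×ˢ (nhds 0 ×ˢ (⊤ : Filter S))

lemma tendsto_fst_unif {S : Type*} : Tendsto (fun p : ℝ × ℝ × S => p.1) (unif S) (nhds 0) := tendsto_fst

lemma tendsto_snd_unif {S : Type*} : Tendsto (fun p : ℝ × ℝ × S => p.2.1) (unif S) (nhds 0) :=
  tendsto_fst.comp tendsto_snd

lemma abs_add_isBigO_one {S : Type*} :
    (fun p : ℝ × ℝ × S => |p.1| + |p.2.1|) =O[unif S] fun _ => (1 : ℝ) := by
  have h : Tendsto (fun p : ℝ × ℝ × S => |p.1| + |p.2.1|) (unif S) (nhds (|0| + |0|)) :=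
    tendsto_fst_unif.abs.add tendsto_snd_unif.abs
  exact h.isBigO_one ℝ

variable {S : Type*} [MeasurableSpace S]

/-- `f lam e σ = g e + lam * D σ + O(|lam| (|lam| + |e|))` uniformly in `σ`, where
`g e = f0 + e * f1 + O(e²)` and `D` is measurable, bounded and centered. -/
structure HasExp (μ : Measure S) (f : ℝ → ℝ → S → ℝ) (g : ℝ → ℝ) (f0 f1 : ℝ) (D : S → ℝ) :
    Prop where
  meas : Measurable D
  bdd : ∃ C, ∀ s, |D s| ≤ C
  cent : ∫ s, D s ∂μ = 0
  base : (fun e => g e - f0 - e * f1) =O[nhds 0] fun e => e ^ 2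
  rem : (fun p : ℝ × ℝ × S => f p.1 p.2.1 p.2.2 - g p.2.1 - p.1 * D p.2.2) =O[unif S]
    fun p => |p.1| * (|p.1| + |p.2.1|)

/-- Existence of an expansion in the sense of `HasExp`. -/
def Good (μ : Measure S) (f : ℝ → ℝ → S → ℝ) : Prop := ∃ g f0 f1 D, HasExp μ f g f0 f1 D

lemma HasExp.D_isBigO {μ : Measure S} {f : ℝ → ℝ → S → ℝ} {g : ℝ → ℝ} {f0 f1 : ℝ} {D : S → ℝ}
    (h : HasExp μ f g f0 f1 D) :
    (fun p : ℝ × ℝ × S => D p.2.2) =O[unif S] fun _ => (1 : ℝ) := by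
  obtain ⟨C, hC⟩ := h.bdd
  exact IsBigO.of_bound C (Eventually.of_forall fun p => by simpa using hC p.2.2)

lemma HasExp.base_isBigO {μ : Measure S} {f : ℝ → ℝ → S → ℝ} {g : ℝ → ℝ} {f0 f1 : ℝ} {D : S → ℝ}
    (h : HasExp μ f g f0 f1 D) : (fun e => g e - f0) =O[nhds 0] fun e => e := by
  have h1 : (fun e : ℝ => e ^ 2) =O[nhds 0] fun e => e := by
    have : (fun e : ℝ => e * e) =O[nhds 0] fun e => e * 1 :=
      (isBigO_refl _ _).mul ((continuous_id.tendsto (0 : ℝ)).isBigO_one ℝ)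
    simpa [sq] using this
  have h2 : (fun e : ℝ => e * f1) =O[nhds 0] fun e => e := by
    simpa [mul_comm] using (isBigO_refl (fun e : ℝ => e) (nhds 0)).const_mul_left f1
  have := (h.base.trans h1).add h2
  exact this.congr_left fun e => by ring

lemma HasExp.base_unif {μ : Measure S} {f : ℝ → ℝ → S → ℝ} {g : ℝ → ℝ} {f0 f1 : ℝ} {D : S → ℝ}
    (h : HasExp μ f g f0 f1 D) :
    (fun p : ℝ × ℝ × S => g p.2.1 - f0) =O[unif S] fun p => |p.1| + |p.2.1| := by
  have h1 : (fun p : ℝ × ℝ × S => g p.2.1 - f0) =O[unif S] fun p => p.2.1 :=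
    h.base_isBigO.comp_tendsto tendsto_snd_unif
  refine h1.trans (IsBigO.of_bound 1 (Eventually.of_forall fun p => ?_))
  rw [Real.norm_eq_abs, Real.norm_eq_abs, abs_of_nonneg (show 0 ≤ |p.1| + |p.2.1| by positivity)]
  linarith [abs_nonneg p.1]

lemma HasExp.g_isBigO {μ : Measure S} {f : ℝ → ℝ → S → ℝ} {g : ℝ → ℝ} {f0 f1 : ℝ} {D : S → ℝ}
    (h : HasExp μ f g f0 f1 D) :
    (fun p : ℝ × ℝ × S => g p.2.1) =O[unif S] fun _ => (1 : ℝ) := by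
  have := (h.base_unif.trans abs_add_isBigO_one).add
    (isBigO_const_const f0 (one_ne_zero (α := ℝ)) (unif S))
  exact this.congr_left fun p => by ring

lemma HasExp.diff_isBigO {μ : Measure S} {f : ℝ → ℝ → S → ℝ} {g : ℝ → ℝ} {f0 f1 : ℝ} {D : S → ℝ}
    (h : HasExp μ f g f0 f1 D) :
    (fun p : ℝ × ℝ × S => f p.1 p.2.1 p.2.2 - g p.2.1) =O[unif S] fun p => |p.1| := by
  have h1 : (fun p : ℝ × ℝ × S => |p.1| * (|p.1| + |p.2.1|)) =O[unif S] fun p => |p.1| := by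
    simpa using (isBigO_refl (fun p : ℝ × ℝ × S => |p.1|) (unif S)).mul abs_add_isBigO_one
  have h2 : (fun p : ℝ × ℝ × S => p.1 * D p.2.2) =O[unif S] fun p => |p.1| := by
    have := ((isBigO_refl (fun p : ℝ × ℝ × S => p.1) (unif S)).abs_right).mul h.D_isBigO
    simpa using this
  exact ((h.rem.trans h1).add h2).congr_left fun p => by ring

lemma HasExp.add {μ : Measure S} [IsProbabilityMeasure μ] {f f' : ℝ → ℝ → S → ℝ} {g g' : ℝ → ℝ}
    {f0 f1 f0' f1' : ℝ} {D D' : S → ℝ}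
    (h : HasExp μ f g f0 f1 D) (h' : HasExp μ f' g' f0' f1' D') :
    HasExp μ (fun l e s => f l e s + f' l e s) (fun e => g e + g' e) (f0 + f0') (f1 + f1')
      (fun s => D s + D' s) := by
  obtain ⟨C, hC⟩ := h.bdd
  obtain ⟨C', hC'⟩ := h'.bdd
  refine ⟨h.meas.add h'.meas, ⟨C + C', fun s => (abs_add_le _ _).trans (add_le_add (hC s) (hC' s))⟩,
    ?_, ?_, ?_⟩
  · rw [integral_add (integrable_of_bound h.meas C hC) (integrable_of_bound h'.meas C' hC'),
      h.cent, h'.cent, add_zero]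
  · exact (h.base.add h'.base).congr_left fun e => by ring
  · exact (h.rem.add h'.rem).congr_left fun e => by ring

lemma HasExp.mul {μ : Measure S} [IsProbabilityMeasure μ] {f f' : ℝ → ℝ → S → ℝ} {g g' : ℝ → ℝ}
    {f0 f1 f0' f1' : ℝ} {D D' : S → ℝ}
    (h : HasExp μ f g f0 f1 D) (h' : HasExp μ f' g' f0' f1' D') :
    HasExp μ (fun l e s => f l e s * f' l e s) (fun e => g e * g' e) (f0 * f0')
      (f1 * f0' + f0 * f1') (fun s => D s * f0' + f0 * D' s) := by
  obtain ⟨C, hC⟩ := h.bdd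
  obtain ⟨C', hC'⟩ := h'.bdd
  refine ⟨(h.meas.mul_const _).add (h'.meas.const_mul _),
    ⟨C * |f0'| + |f0| * C', fun s => ?_⟩, ?_, ?_, ?_⟩
  · refine (abs_add_le _ _).trans ?_
    rw [abs_mul, abs_mul]
    gcongr
    · exact hC s
    · exact hC' s
  · rw [integral_add ((integrable_of_bound h.meas C hC).mul_const _)
      ((integrable_of_bound h'.meas C' hC').const_mul _), integral_mul_const, integral_const_mul,
      h.cent, h'.cent]
    ring
  · have t1 : (fun e => (g e - f0) * (g' e - f0')) =O[nhds 0] fun e => e ^ 2 := by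
      simpa [sq] using h.base_isBigO.mul h'.base_isBigO
    have t2 := h.base.const_mul_left f0'
    have t3 := h'.base.const_mul_left f0
    exact ((t1.add t2).add t3).congr_left fun e => by ring
  · have t1 := (h.g_isBigO.mul h'.rem)
    have hf' : (fun p : ℝ × ℝ × S => f' p.1 p.2.1 p.2.2) =O[unif S] fun _ => (1 : ℝ) := by
      have a1 : (fun p : ℝ × ℝ × S => |p.1|) =O[unif S] fun _ => (1 : ℝ) :=
        tendsto_fst_unif.abs.isBigO_one ℝ
      exact ((h'.diff_isBigO.trans a1).add h'.g_isBigO).congr_left fun p => by ring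
    have t2 := h.rem.mul hf'
    have aone : (fun p : ℝ × ℝ × S => |p.1|) =O[unif S] fun p => |p.1| + |p.2.1| :=
      IsBigO.of_bound 1 (Eventually.of_forall fun p => by
        rw [Real.norm_eq_abs, Real.norm_eq_abs, abs_abs,
          abs_of_nonneg (show 0 ≤ |p.1| + |p.2.1| by positivity)]
        linarith [abs_nonneg p.2.1])
    have lD : (fun p : ℝ × ℝ × S => p.1 * D p.2.2) =O[unif S] fun p => |p.1| := by
      simpa using ((isBigO_refl (fun p : ℝ × ℝ × S => p.1) (unif S)).abs_right).mul h.D_isBigO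
    have lD' : (fun p : ℝ × ℝ × S => p.1 * D' p.2.2) =O[unif S] fun p => |p.1| := by
      simpa using ((isBigO_refl (fun p : ℝ × ℝ × S => p.1) (unif S)).abs_right).mul h'.D_isBigO
    have t3 := lD.mul (h'.diff_isBigO.trans aone)
    have t4 := lD.mul h'.base_unif
    have t5 := lD'.mul h.base_unif
    simp only [one_mul] at t1
    simp only [mul_one] at t2
    exact ((((t1.add t2).add t3).add t4).add t5).congr_left fun p => by ring

lemma hasExp_const (μ : Measure S) (c : ℝ) :
    HasExp μ (fun _ _ _ => c) (fun _ => c) c 0 (fun _ => 0) := by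
  refine ⟨measurable_const, ⟨0, fun s => by simp⟩, by simp, ?_, ?_⟩
  · simpa using isBigO_zero _ _
  · simpa using isBigO_zero _ _

lemma hasExp_energy (μ : Measure S) :
    HasExp μ (fun _ e _ => e) (fun e => e) 0 1 (fun _ => 0) := by
  refine ⟨measurable_const, ⟨0, fun s => by simp⟩, by simp, ?_, ?_⟩
  · simpa using isBigO_zero _ _
  · simpa using isBigO_zero _ _

lemma hasExp_disorder (μ : Measure S) {u : S → ℝ} (hm : Measurable u) (hb : ∀ s, |u s| ≤ 1)
    (hc : ∫ s, u s ∂μ = 0) :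
    HasExp μ (fun l _ s => l * u s) (fun _ => 0) 0 0 u := by
  refine ⟨hm, ⟨1, hb⟩, hc, ?_, ?_⟩
  · simpa using isBigO_zero _ _
  · simpa using isBigO_zero _ _

lemma hasExp_inv (μ : Measure S) {u : S → ℝ} (hm : Measurable u) (hb : ∀ s, |u s| ≤ 1)
    (hc : ∫ s, u s ∂μ = 0) {t : ℝ} (ht : 0 < t) :
    HasExp μ (fun l _ s => (t + l * u s)⁻¹) (fun _ => t⁻¹) t⁻¹ 0 (fun s => -(t ^ 2)⁻¹ * u s) := by
  refine ⟨hm.const_mul _, ⟨(t ^ 2)⁻¹, fun s => ?_⟩, by rw [integral_const_mul, hc, mul_zero], ?_, ?_⟩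
  · rw [abs_mul, abs_neg, abs_of_pos (by positivity)]
    exact mul_le_of_le_one_right (by positivity) (hb s)
  · simpa using isBigO_zero _ _
  · refine IsBigO.of_bound (2 / t ^ 3) ?_
    have hev : ∀ᶠ p : ℝ × ℝ × S in unif S, |p.1| < t / 2 := by
      have := (tendsto_fst_unif (S := S)).abs
      rw [abs_zero] at this
      exact this.eventually_lt_const (by linarith)
    filter_upwards [hev] with p hp
    have hlu : |p.1 * u p.2.2| ≤ |p.1| := by
      rw [abs_mul]; exact mul_le_of_le_one_right (abs_nonneg _) (hb _)
    have hpos : t / 2 ≤ t + p.1 * u p.2.2 := by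
      have := (abs_le.mp hlu).1
      linarith
    have hne : t + p.1 * u p.2.2 ≠ 0 := by linarith
    have e : (t + p.1 * u p.2.2)⁻¹ - t⁻¹ - p.1 * (-(t ^ 2)⁻¹ * u p.2.2)
        = (p.1 * u p.2.2) ^ 2 / (t ^ 2 * (t + p.1 * u p.2.2)) := by
      field_simp; ring
    rw [e, Real.norm_eq_abs, Real.norm_eq_abs, abs_div,
      abs_of_nonneg (show 0 ≤ |p.1| * (|p.1| + |p.2.1|) by positivity),
      abs_of_pos (show 0 < t ^ 2 * (t + p.1 * u p.2.2) from mul_pos (by positivity) (by linarith)),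
      abs_of_nonneg (sq_nonneg _)]
    have n1 : (p.1 * u p.2.2) ^ 2 ≤ |p.1| * (|p.1| + |p.2.1|) := by
      have : (p.1 * u p.2.2) ^ 2 ≤ |p.1| ^ 2 := sq_le_sq' (by linarith [(abs_le.mp hlu).1])
        (abs_le.mp hlu).2
      nlinarith [abs_nonneg p.1, abs_nonneg p.2.1]
    have n2 : t ^ 3 / 2 ≤ t ^ 2 * (t + p.1 * u p.2.2) := by nlinarith [sq_nonneg t]
    calc (p.1 * u p.2.2) ^ 2 / (t ^ 2 * (t + p.1 * u p.2.2))
        ≤ (|p.1| * (|p.1| + |p.2.1|)) / (t ^ 3 / 2) := by gcongr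
      _ = _ := by field_simp

lemma Good.add {μ : Measure S} [IsProbabilityMeasure μ] {f f' : ℝ → ℝ → S → ℝ} (h : Good μ f)
    (h' : Good μ f') : Good μ fun l e s => f l e s + f' l e s := by
  obtain ⟨g, f0, f1, D, h⟩ := h
  obtain ⟨g', f0', f1', D', h'⟩ := h'
  exact ⟨_, _, _, _, h.add h'⟩

lemma Good.mul {μ : Measure S} [IsProbabilityMeasure μ] {f f' : ℝ → ℝ → S → ℝ} (h : Good μ f)
    (h' : Good μ f') : Good μ fun l e s => f l e s * f' l e s := by
  obtain ⟨g, f0, f1, D, h⟩ := h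
  obtain ⟨g', f0', f1', D', h'⟩ := h'
  exact ⟨_, _, _, _, h.mul h'⟩

lemma good_const (μ : Measure S) (c : ℝ) : Good μ fun _ _ _ => c := ⟨_, _, _, _, hasExp_const μ c⟩

lemma good_matMul {μ : Measure S} [IsProbabilityMeasure μ]
    {F G : ℝ → ℝ → S → Matrix (Fin 2) (Fin 2) ℝ}
    (hF : ∀ i j, Good μ fun l e s => F l e s i j) (hG : ∀ i j, Good μ fun l e s => G l e s i j)
    (i j : Fin 2) : Good μ fun l e s => (F l e s * G l e s) i j := by
  simp only [Matrix.mul_apply, Fin.sum_univ_two]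
  exact ((hF _ _).mul (hG _ _)).add ((hF _ _).mul (hG _ _))

lemma good_transfer (μ : Measure S) [IsProbabilityMeasure μ] {u w : S → ℝ} (hu : Measurable u)
    (hub : ∀ s, |u s| ≤ 1) (huc : ∫ s, u s ∂μ = 0) (hw : Measurable w)
    (hwb : ∀ s, |w s| ≤ 1) (hwc : ∫ s, w s ∂μ = 0) {t : ℝ} (ht : 0 < t) (v E : ℝ) (i j : Fin 2) :
    Good μ fun l e s => transfer (E + e) (t + l * u s) (v + l * w s) i j := by
  have hinv : Good μ fun l _ s => (t + l * u s)⁻¹ := ⟨_, _, _, _, hasExp_inv μ hu hub huc ht⟩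
  have ht' : Good μ fun l _ s => t + l * u s :=
    (good_const μ t).add ⟨_, _, _, _, hasExp_disorder μ hu hub huc⟩
  have hv' : Good μ fun l _ s => v + l * w s :=
    (good_const μ v).add ⟨_, _, _, _, hasExp_disorder μ hw hwb hwc⟩
  have hE : Good μ fun _ e (_ : S) => E + e :=
    (good_const μ E).add ⟨_, _, _, _, hasExp_energy μ⟩
  fin_cases i <;> fin_cases j <;> simp [transfer]
  · have := (hE.add ((good_const μ (-1)).mul hv')).mul hinv
    simpa [div_eq_mul_inv, sub_eq_add_neg, add_comm] using this
  · have := (good_const μ (-1)).mul ht'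
    simpa [sub_eq_add_neg, add_comm] using this
  · exact hinv
  · exact good_const μ 0

lemma good_ofFn_prod {μ : Measure S} [IsProbabilityMeasure μ] (L : ℕ)
    (F : Fin L → ℝ → ℝ → S → Matrix (Fin 2) (Fin 2) ℝ)
    (hF : ∀ k i j, Good μ fun l e s => F k l e s i j) (i j : Fin 2) :
    Good μ fun l e s => (List.ofFn fun k => F k l e s).prod i j := by
  induction L generalizing i j with
  | zero => simpa using good_const μ _
  | succ L ih =>
    simp only [List.ofFn_succ, List.prod_cons]
    exact good_matMul (hF 0) (fun i j => ih _ (fun k => hF k.succ) i j) i j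

section Consequences

variable {μ : Measure S} {f : ℝ → ℝ → S → ℝ} {g : ℝ → ℝ} {f0 f1 : ℝ} {D : S → ℝ}

lemma HasExp.g_zero (h : HasExp μ f g f0 f1 D) : g 0 = f0 := by
  have h2 := h.base
  rw [isBigO_iff] at h2
  obtain ⟨c, hc⟩ := h2
  have := hc.self_of_nhds
  simp only [zero_mul, sub_zero, ne_eq, OfNat.ofNat_ne_zero, not_false_eq_true, zero_pow, norm_zero,
    mul_zero, norm_le_zero_iff] at this
  linarith

lemma HasExp.exists_bounds (h : HasExp μ f g f0 f1 D) : ∃ C > (0 : ℝ), ∃ r > (0 : ℝ),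
    (∀ s, |D s| ≤ C) ∧ (∀ e, |e| < r → |g e - f0 - e * f1| ≤ C * e ^ 2 ∧ |g e - f0| ≤ C * |e|) ∧
    ∀ l e s, |l| < r → |e| < r → |f l e s - g e - l * D s| ≤ C * (|l| * (|l| + |e|)) := by
  obtain ⟨C1, hC1⟩ := h.bdd
  obtain ⟨C2, hC2, h2⟩ := h.base.exists_pos
  obtain ⟨C3, hC3, h3⟩ := h.rem.exists_pos
  obtain ⟨C4, hC4, h4⟩ := h.base_isBigO.exists_pos
  have h2 := h2.bound
  have h3 := h3.bound
  have h4 := h4.bound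
  obtain ⟨r2, hr2, h2⟩ := Metric.eventually_nhds_iff.mp h2
  obtain ⟨r4, hr4, h4⟩ := Metric.eventually_nhds_iff.mp h4
  rw [eventually_prod_iff] at h3
  obtain ⟨pa, hpa, pb, hpb, h3⟩ := h3
  rw [eventually_prod_iff] at hpb
  obtain ⟨pc, hpc, pd, hpd, hpb⟩ := hpb
  rw [eventually_top] at hpd
  obtain ⟨r5, hr5, hpa⟩ := Metric.eventually_nhds_iff.mp hpa
  obtain ⟨r6, hr6, hpc⟩ := Metric.eventually_nhds_iff.mp hpc
  refine ⟨|C1| + C2 + C3 + C4, by positivity, min (min r2 r4) (min r5 r6),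
    lt_min (lt_min hr2 hr4) (lt_min hr5 hr6), fun s => ?_, fun e he => ?_, fun l e s hl he => ?_⟩
  · linarith [hC1 s, le_abs_self C1]
  · simp only [lt_min_iff] at he
    have a := h2 (y := e) (by simpa using he.1.1)
    have b := h4 (y := e) (by simpa using he.1.2)
    simp only [Real.norm_eq_abs] at a b
    rw [abs_of_nonneg (sq_nonneg e)] at a
    constructor
    · refine a.trans ?_
      nlinarith [sq_nonneg e, mul_nonneg (show 0 ≤ |C1| + C3 + C4 by positivity) (sq_nonneg e)]
    · refine b.trans ?_
      nlinarith [mul_nonneg (show 0 ≤ |C1| + C2 + C3 by positivity) (abs_nonneg e)]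
  · simp only [lt_min_iff] at he hl
    have a := h3 (hpa (y := l) (by simpa using hl.2.1))
      (hpb (hpc (y := e) (by simpa using he.2.2)) (hpd s))
    simp only [Real.norm_eq_abs] at a
    have hp : 0 ≤ |l| * (|l| + |e|) := by positivity
    rw [abs_of_nonneg hp] at a
    refine a.trans ?_
    nlinarith [mul_nonneg (show 0 ≤ |C1| + C2 + C4 by positivity) hp]

lemma hasDerivAt_of_sq_bound {u : ℝ → ℝ} {u0 u1 C r : ℝ} (hr : 0 < r)
    (h : ∀ y, |y| < r → |u y - u0 - y * u1| ≤ C * y ^ 2) : HasDerivAt u u1 0 := by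
  have h0 : u 0 = u0 := by
    have := h 0 (by simpa using hr)
    simp only [zero_mul, sub_zero, ne_eq, OfNat.ofNat_ne_zero, not_false_eq_true, zero_pow,
      mul_zero] at this
    linarith [abs_nonpos_iff.mp this]
  rw [hasDerivAt_iff_isLittleO]
  have hO : (fun y => u y - u 0 - (y - 0) • u1) =O[nhds 0] fun y : ℝ => y ^ 2 := by
    refine IsBigO.of_bound C ?_
    rw [Metric.eventually_nhds_iff]
    refine ⟨r, hr, fun y hy => ?_⟩
    rw [Real.norm_eq_abs, Real.norm_eq_abs, abs_of_nonneg (sq_nonneg y), h0, sub_zero, smul_eq_mul]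
    exact h y (by simpa using hy)
  refine hO.trans_isLittleO ?_
  simpa using isLittleO_pow_id (𝕜 := ℝ) (n := 2) (by norm_num)

lemma HasExp.hasDerivAt_energy (h : HasExp μ f g f0 f1 D) (s : S) :
    HasDerivAt (fun e => f 0 e s) f1 0 := by
  obtain ⟨C, hC, r, hr, -, hg, hf⟩ := h.exists_bounds
  refine hasDerivAt_of_sq_bound (C := C) (u0 := f0) hr fun e he => ?_
  have := hf 0 e s (by simpa using hr) he
  simp only [abs_zero, zero_mul, sub_zero, mul_zero] at this
  have e1 : f 0 e s = g e := by linarith [abs_nonpos_iff.mp this]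
  rw [e1]
  exact (hg e he).1

lemma HasExp.hasDerivAt_lam (h : HasExp μ f g f0 f1 D) (s : S) :
    HasDerivAt (fun l => f l 0 s) (D s) 0 := by
  obtain ⟨C, hC, r, hr, -, hg, hf⟩ := h.exists_bounds
  refine hasDerivAt_of_sq_bound (C := C) (u0 := g 0) hr fun l hl => ?_
  have := hf l 0 s hl (by simpa using hr)
  simpa [← sq] using this

lemma HasExp.f_zero (h : HasExp μ f g f0 f1 D) (s : S) : f 0 0 s = f0 := by
  obtain ⟨C, hC, r, hr, -, hg, hf⟩ := h.exists_bounds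
  have := hf 0 0 s (by simpa using hr) (by simpa using hr)
  simp only [abs_zero, zero_mul, sub_zero, mul_zero, h.g_zero] at this
  linarith [abs_nonpos_iff.mp this]

end Consequences

end Expansion

/-! ### The elliptic normal form -/

section Elliptic

/-- Bounds, pointwise and in mean, for `u (P + i Q)` when `u` is a unit complex number within `O(θ)`
of `1`, `P` is of order `κ θ` and `Q` is within `O(κ θ)` of `τ`. -/
lemma rot_bounds {S : Type*} [MeasurableSpace S] (μ : Measure S) [IsProbabilityMeasure μ]
    {u : ℂ} (hu : ‖u‖ = 1) {A κ θ : ℝ} (hA : 1 ≤ A) (hκ : 0 < κ) (hθ : 0 < θ) (hθ1 : θ ≤ 1)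
    (hu1 : ‖u - 1‖ ≤ A * θ) {P Q τ : S → ℝ} (hPm : Measurable P) (hQm : Measurable Q)
    (hP : ∀ s, |P s| ≤ A * κ * θ) (hQ : ∀ s, |Q s - τ s| ≤ A * κ * θ) (hτ : ∀ s, |τ s| ≤ A * κ)
    {ρ : ℝ} (hPi : |∫ s, P s ∂μ| ≤ A * ρ) (hQi : |∫ s, Q s ∂μ| ≤ A * ρ) :
    (∀ s, ‖u * ((P s : ℂ) + (Q s : ℂ) * Complex.I)‖ ≤ 3 * A ^ 2 * κ) ∧
    (∀ s, ‖u * ((P s : ℂ) + (Q s : ℂ) * Complex.I) - Complex.I * (τ s : ℂ)‖ ≤ 3 * A ^ 2 * κ * θ) ∧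
    ‖∫ s, u * ((P s : ℂ) + (Q s : ℂ) * Complex.I) ∂μ‖ ≤ 3 * A ^ 2 * ρ := by
  have hAA : A ≤ A ^ 2 := by nlinarith
  have hκθ : 0 < κ * θ := by positivity
  have key : ∀ s, ‖u * ((P s : ℂ) + (Q s : ℂ) * Complex.I) - Complex.I * (τ s : ℂ)‖
      ≤ 3 * A ^ 2 * κ * θ := by
    intro s
    have e : u * ((P s : ℂ) + (Q s : ℂ) * Complex.I) - Complex.I * (τ s : ℂ)
        = u * ((P s : ℂ) + ((Q s - τ s : ℝ) : ℂ) * Complex.I)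
          + (u - 1) * ((τ s : ℂ) * Complex.I) := by push_cast; ring
    rw [e]
    refine (norm_add_le _ _).trans ?_
    rw [norm_mul, norm_mul, hu, one_mul]
    have h1 : ‖(P s : ℂ) + ((Q s - τ s : ℝ) : ℂ) * Complex.I‖ ≤ A * κ * θ + A * κ * θ := by
      refine (norm_add_le _ _).trans ?_
      rw [norm_mul, Complex.norm_I, mul_one, Complex.norm_real, Complex.norm_real]
      exact add_le_add (hP s) (hQ s)
    have h2 : ‖u - 1‖ * ‖(τ s : ℂ) * Complex.I‖ ≤ (A * θ) * (A * κ) := by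
      rw [norm_mul, Complex.norm_I, mul_one, Complex.norm_real]
      exact mul_le_mul hu1 (hτ s) (norm_nonneg _) (by positivity)
    nlinarith
  refine ⟨fun s => ?_, key, ?_⟩
  · rw [norm_mul, hu, one_mul]
    refine (norm_add_le _ _).trans ?_
    rw [norm_mul, Complex.norm_I, mul_one, Complex.norm_real, Complex.norm_real, Real.norm_eq_abs,
      Real.norm_eq_abs]
    have h3 : |Q s| ≤ A * κ * θ + A * κ := by
      have := abs_add_le (Q s - τ s) (τ s)
      rw [sub_add_cancel] at this
      linarith [hQ s, hτ s]
    have h4 : A * κ * θ ≤ A * κ := mul_le_of_le_one_right (by positivity) hθ1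
    have h5 : A * κ ≤ A ^ 2 * κ := by gcongr
    linarith [hP s]
  · have iP : Integrable P μ := integrable_of_bound hPm _ hP
    have iQ : Integrable Q μ := by
      refine integrable_of_bound hQm (A * κ * θ + A * κ) fun s => ?_
      have := abs_add_le (Q s - τ s) (τ s)
      rw [sub_add_cancel] at this
      rw [Real.norm_eq_abs]
      linarith [hQ s, hτ s]
    rw [integral_const_mul, integral_add iP.ofReal (iQ.ofReal.mul_const _), integral_mul_const]
    rw [integral_complex_ofReal, integral_complex_ofReal, norm_mul, hu, one_mul]
    refine (norm_add_le _ _).trans ?_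
    rw [norm_mul, Complex.norm_I, mul_one, Complex.norm_real, Complex.norm_real, Real.norm_eq_abs,
      Real.norm_eq_abs]
    have : 0 ≤ ρ := by
      have := (abs_nonneg _).trans hPi
      exact nonneg_of_mul_nonneg_right this (by linarith)
    nlinarith

/-- Conjugation by the lower triangular matrix `[[d, 0], [m/d, 1/d]]`. -/
lemma conj_entries (d m : ℝ) (hd : d ≠ 0) (G : Matrix (Fin 2) (Fin 2) ℝ) :
    !![d, 0; m / d, 1 / d] * G * !![1 / d, 0; -m / d, d]
      = !![G 0 0 - m * G 0 1, d ^ 2 * G 0 1;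
          (G 1 0 + m * (G 0 0 - G 1 1) - m ^ 2 * G 0 1) / d ^ 2, G 1 1 + m * G 0 1] := by
  conv_lhs => rw [Matrix.eta_fin_two G]
  rw [Matrix.mul_fin_two, Matrix.mul_fin_two]
  ext i j
  fin_cases i <;> fin_cases j <;> simp <;> field_simp <;> ring

/-- The two off-diagonal entries of a perturbation conjugated as in `conj_entries`, with
`d² = ν = sn / g01` of order `θ`: the lower one is amplified by `1 / θ`, the upper one damped
by `θ`. -/
lemma conj_aux {K θ ν m sn g01 B v00 v01 v10 v11 : ℝ} (hK : 1 ≤ K)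
    (hθ : 0 < θ) (hsn : 0 < sn) (hsn1 : θ ≤ K * sn) (hsn2 : sn ≤ K * θ)
    (hg2 : |g01 - 1| ≤ 1 / 2) (hν : ν = sn / g01) (hB : 0 ≤ B)
    (h01 : |v01| ≤ B) (h10 : |v10 + m * (v00 - v11) - m ^ 2 * v01| ≤ B) :
    |(v10 + m * (v00 - v11) - m ^ 2 * v01) / ν| ≤ 2 * K * (B / θ) ∧ |ν * v01| ≤ 2 * K * (θ * B) := by
  have hg := abs_le.mp hg2
  have hg0 : 0 < g01 := by linarith
  have hν0 : 0 < ν := by rw [hν]; positivity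
  constructor
  · rw [abs_div, abs_of_pos hν0]
    have h1 : θ ≤ 2 * K * ν := by
      rw [hν, mul_div_assoc', le_div_iff₀ hg0]
      nlinarith
    rw [div_le_iff₀ hν0]
    calc _ ≤ B := h10
      _ = (B / θ) * θ := by field_simp
      _ ≤ (B / θ) * (2 * K * ν) := by gcongr
      _ = _ := by ring
  · rw [abs_mul, abs_of_pos hν0]
    have h2 : ν ≤ 2 * K * θ := by
      rw [hν, div_le_iff₀ hg0]
      nlinarith [mul_pos (show 0 < K by linarith) hθ]
    calc _ ≤ (2 * K * θ) * B := by gcongr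
      _ = _ := by ring

set_option maxHeartbeats 1000000 in
/-- Sizes of the real and imaginary parts of the coefficients `cA` and `cB` of a conjugated
perturbation of an elliptic matrix whose angle is of order `θ`. Only the imaginary parts are of order
`κ`, and both are close to `κ θ X / (2 sn)`. -/
lemma conj_bounds {K κ θ ν m sn g01 X v00 v01 v10 v11 : ℝ} (hK : 1 ≤ K) (hκ : 0 < κ) (hκ1 : κ ≤ 1)
    (hθ : 0 < θ) (hθ1 : θ ≤ 1) (hsn : 0 < sn) (hsn1 : θ ≤ K * sn) (hsn2 : sn ≤ K * θ)
    (hg : |g01 - 1| ≤ K * θ ^ 2) (hg2 : |g01 - 1| ≤ 1 / 2) (hν : ν = sn / g01)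
    (hm : |m| ≤ 2 * K * θ ^ 2) (hm2 : |m| ≤ 1) (hX : |X| ≤ K)
    (h00 : |v00| ≤ 3 * K * (κ * θ)) (h01 : |v01| ≤ 3 * K * (κ * θ)) (h11 : |v11| ≤ 3 * K * (κ * θ))
    (h10 : |v10 - κ * θ * X| ≤ K * (κ * θ) * (κ * θ + θ ^ 2)) :
    |(v00 + v11) / 2| ≤ 60 * K ^ 3 * κ * θ ∧
    |(v00 - v11 - 2 * m * v01) / 2| ≤ 60 * K ^ 3 * κ * θ ∧
    |((v10 + m * (v00 - v11) - m ^ 2 * v01) / ν - ν * v01) / 2 - κ * θ * X / (2 * sn)|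
      ≤ 60 * K ^ 3 * κ * θ ∧
    |((v10 + m * (v00 - v11) - m ^ 2 * v01) / ν + ν * v01) / 2 - κ * θ * X / (2 * sn)|
      ≤ 60 * K ^ 3 * κ * θ ∧
    |κ * θ * X / (2 * sn)| ≤ 60 * K ^ 3 * κ := by
  have hK0 : 0 < K := by linarith
  have hκθ : 0 < κ * θ := by positivity
  have hK2 : K ≤ K ^ 2 := by nlinarith
  have hK3 : K ^ 2 ≤ K ^ 3 := by nlinarith [sq_nonneg K]
  have hθ2 : θ ^ 2 ≤ θ := by nlinarith
  have hg' := abs_le.mp hg2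
  have hg0 : 0 < g01 := by linarith
  have e0 : 0 ≤ K * (κ * θ) := by positivity
  have e1 := mul_le_mul_of_nonneg_right hK2 hκθ.le
  have e2 := mul_le_mul_of_nonneg_right hK3 hκθ.le
  have h0 := abs_le.mp h00
  have h1 := abs_le.mp h01
  have h2 := abs_le.mp h11
  have hmv : |m * v01| ≤ 3 * K * (κ * θ) := by
    rw [abs_mul]
    calc _ ≤ 1 * (3 * K * (κ * θ)) := by gcongr
      _ = _ := by ring
  have hmv' := abs_le.mp hmv
  -- the part of the numerator which is of lower order
  set R := (v10 - κ * θ * X) + m * (v00 - v11) - m ^ 2 * v01 with hR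
  have hRb : |R| ≤ 20 * K ^ 2 * (κ * θ) * θ := by
    have r1 : |v10 - κ * θ * X| ≤ 2 * K ^ 2 * (κ * θ) * θ := by
      refine h10.trans ?_
      have : κ * θ + θ ^ 2 ≤ 2 * θ := by nlinarith
      calc _ ≤ K * (κ * θ) * (2 * θ) := by gcongr
        _ = 2 * (K * (κ * θ)) * θ := by ring
        _ ≤ 2 * (K ^ 2 * (κ * θ)) * θ := by gcongr
        _ = _ := by ring
    have r2 : |m * (v00 - v11)| ≤ 12 * K ^ 2 * (κ * θ) * θ := by
      rw [abs_mul]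
      have : |v00 - v11| ≤ 6 * K * (κ * θ) := by
        rw [abs_le]; constructor <;> linarith
      calc _ ≤ (2 * K * θ ^ 2) * (6 * K * (κ * θ)) := by gcongr
        _ = 12 * K ^ 2 * (κ * θ) * θ ^ 2 := by ring
        _ ≤ _ := by gcongr
    have r3 : |m ^ 2 * v01| ≤ 6 * K ^ 2 * (κ * θ) * θ := by
      rw [sq, mul_assoc, abs_mul]
      calc _ ≤ (2 * K * θ ^ 2) * (3 * K * (κ * θ)) := by gcongr
        _ = 6 * K ^ 2 * (κ * θ) * θ ^ 2 := by ring
        _ ≤ _ := by gcongr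
    have a1 := abs_le.mp r1
    have a2 := abs_le.mp r2
    have a3 := abs_le.mp r3
    rw [hR, abs_le]
    constructor <;> linarith
  have hi : κ * θ / sn ≤ K * κ := by
    rw [div_le_iff₀ hsn]; nlinarith
  have hi0 : 0 < κ * θ / sn := by positivity
  have hvν : |ν * v01| ≤ 6 * K ^ 2 * (κ * θ) := by
    have hν0 : 0 < ν := by rw [hν]; positivity
    have h2 : ν ≤ 2 * K * θ := by
      rw [hν, div_le_iff₀ hg0]
      nlinarith [mul_pos hK0 hθ]
    rw [abs_mul, abs_of_pos hν0]
    calc _ ≤ (2 * K * θ) * (3 * K * (κ * θ)) := by gcongr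
      _ = 6 * K ^ 2 * (κ * θ) * θ := by ring
      _ ≤ 6 * K ^ 2 * (κ * θ) * 1 := by gcongr
      _ = _ := by ring
  have hmain : |(v10 + m * (v00 - v11) - m ^ 2 * v01) / ν - κ * θ * X / sn|
      ≤ 31 * K ^ 3 * (κ * θ) := by
    have e : (v10 + m * (v00 - v11) - m ^ 2 * v01) / ν - κ * θ * X / sn
        = (κ * θ / sn) * ((g01 - 1) * X) + g01 * (R / sn) := by
      rw [hν, hR]; field_simp; ring
    rw [e]
    have b1 : |(κ * θ / sn) * ((g01 - 1) * X)| ≤ K ^ 3 * (κ * θ) := by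
      rw [abs_mul, abs_mul, abs_of_pos hi0]
      calc _ ≤ (K * κ) * ((K * θ ^ 2) * K) := by gcongr
        _ = K ^ 3 * (κ * θ ^ 2) := by ring
        _ ≤ _ := by gcongr
    have b2 : |g01 * (R / sn)| ≤ 30 * K ^ 3 * (κ * θ) := by
      rw [abs_mul, abs_div, abs_of_pos hsn, abs_of_pos hg0]
      have : |R| / sn ≤ 20 * K ^ 3 * (κ * θ) := by
        rw [div_le_iff₀ hsn]
        calc _ ≤ 20 * K ^ 2 * (κ * θ) * θ := hRb
          _ ≤ 20 * K ^ 2 * (κ * θ) * (K * sn) := by gcongr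
          _ = _ := by ring
      calc _ ≤ (3 / 2) * (20 * K ^ 3 * (κ * θ)) := by gcongr; linarith
        _ = _ := by ring
    have a1 := abs_le.mp b1
    have a2 := abs_le.mp b2
    rw [abs_le]
    constructor <;> linarith
  have hm1 := abs_le.mp hmain
  have hv1 := abs_le.mp hvν
  have hsplit : κ * θ * X / (2 * sn) = (κ * θ * X / sn) / 2 := by field_simp
  refine ⟨?_, ?_, ?_, ?_, ?_⟩
  · rw [abs_le]; constructor <;> linarith
  · rw [abs_le]; constructor <;> linarith
  · rw [hsplit, abs_le]; constructor <;> linarith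
  · rw [hsplit, abs_le]; constructor <;> linarith
  · have : κ * θ * X / (2 * sn) = (κ * θ / sn) * X / 2 := by field_simp
    rw [this, abs_div, abs_mul, abs_of_pos hi0, abs_two]
    have : κ * θ / sn * |X| ≤ (K * κ) * K := by gcongr
    have e3 := mul_le_mul_of_nonneg_right hK3 hκ.le
    nlinarith [mul_pos (pow_pos hK0 3) hκ]

/-- Sizes of the same four combinations as in `conj_bounds`, when all entries are only known to be of
order `θ ρ`; this is used for the mean values of the perturbation. -/
lemma conj_int_bounds {K θ ν m sn g01 ρ v00 v01 v10 v11 : ℝ} (hK : 1 ≤ K)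
    (hθ : 0 < θ) (hθ1 : θ ≤ 1) (hsn : 0 < sn) (hsn1 : θ ≤ K * sn) (hsn2 : sn ≤ K * θ)
    (hg2 : |g01 - 1| ≤ 1 / 2) (hν : ν = sn / g01) (hm2 : |m| ≤ 1) (hρ : 0 ≤ ρ)
    (h00 : |v00| ≤ K * θ * ρ) (h01 : |v01| ≤ K * θ * ρ) (h11 : |v11| ≤ K * θ * ρ)
    (h10 : |v10| ≤ K * θ * ρ) :
    |(v00 + v11) / 2| ≤ 60 * K ^ 3 * ρ ∧
    |(v00 - v11 - 2 * m * v01) / 2| ≤ 60 * K ^ 3 * ρ ∧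
    |((v10 + m * (v00 - v11) - m ^ 2 * v01) / ν - ν * v01) / 2| ≤ 60 * K ^ 3 * ρ ∧
    |((v10 + m * (v00 - v11) - m ^ 2 * v01) / ν + ν * v01) / 2| ≤ 60 * K ^ 3 * ρ := by
  have hK0 : 0 < K := by linarith
  have hK2 : K ≤ K ^ 2 := by nlinarith
  have hK3 : K ^ 2 ≤ K ^ 3 := by nlinarith [sq_nonneg K]
  have e1 := mul_le_mul_of_nonneg_right hK2 hρ
  have e2 := mul_le_mul_of_nonneg_right hK3 hρ
  have hB : 0 ≤ K * θ * ρ := by positivity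
  have hBK : K * θ * ρ ≤ K * ρ := by
    have := mul_le_mul_of_nonneg_left hθ1 (show 0 ≤ K * ρ by positivity)
    nlinarith
  have hmv : |m * v01| ≤ K * θ * ρ := by
    rw [abs_mul]
    calc _ ≤ 1 * (K * θ * ρ) := by gcongr
      _ = _ := by ring
  have hmmv : |m ^ 2 * v01| ≤ K * θ * ρ := by
    rw [sq, mul_assoc, abs_mul]
    calc _ ≤ 1 * (K * θ * ρ) := by gcongr
      _ = _ := by ring
  have h0 := abs_le.mp h00
  have h1 := abs_le.mp h01
  have h2 := abs_le.mp h11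
  have h3 := abs_le.mp h10
  have hmvd : |m * (v00 - v11)| ≤ 2 * (K * θ * ρ) := by
    rw [abs_mul]
    have : |v00 - v11| ≤ 2 * (K * θ * ρ) := by
      rw [abs_le]; constructor <;> linarith
    calc _ ≤ 1 * (2 * (K * θ * ρ)) := by gcongr
      _ = _ := by ring
  have h4 := abs_le.mp hmv
  have h5 := abs_le.mp hmmv
  have h6 := abs_le.mp hmvd
  obtain ⟨a1, a2⟩ := conj_aux (B := 4 * (K * θ * ρ)) (v00 := v00) (v01 := v01) (v10 := v10)
    (v11 := v11) (m := m) hK hθ hsn hsn1 hsn2 hg2 hν (by positivity) (by linarith) (by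
      rw [abs_le]; constructor <;> linarith)
  have t1 : 2 * K * (4 * (K * θ * ρ) / θ) = 8 * (K ^ 2 * ρ) := by field_simp; ring
  have t2 : 2 * K * (θ * (4 * (K * θ * ρ))) ≤ 8 * (K ^ 2 * ρ) := by
    have : θ * θ ≤ 1 := by nlinarith
    calc _ = 8 * (K ^ 2 * ρ) * (θ * θ) := by ring
      _ ≤ 8 * (K ^ 2 * ρ) * 1 := by gcongr
      _ = _ := by ring
  rw [t1] at a1
  have a1 := abs_le.mp a1
  have a2 := abs_le.mp (a2.trans t2)
  have hp : 0 ≤ K * ρ := by positivity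
  refine ⟨?_, ?_, ?_, ?_⟩ <;> rw [abs_le] <;> constructor <;> linarith

end Elliptic

/-! ### One step near an elliptic matrix -/

section EllipticStep

lemma conj_inv (d m : ℝ) (hd : d ≠ 0) :
    !![1 / d, 0; -m / d, d] * !![d, 0; m / d, 1 / d] = (1 : Matrix (Fin 2) (Fin 2) ℝ) := by
  rw [Matrix.mul_fin_two, Matrix.one_fin_two]
  ext i j
  fin_cases i <;> fin_cases j <;> simp [hd]
  field_simp
  ring

/-- The complex coordinates of a conjugated perturbation `G = g + V` of `g`, when the conjugation
turns `g` into the rotation by the conjugate of `u = c + i sn`. -/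
lemma conj_cA_cB {G g V : Matrix (Fin 2) (Fin 2) ℝ} {d m ν c sn sg : ℝ}
    (hV : ∀ i j, G i j = g i j + V i j) (hd : d ≠ 0) (hd2 : d ^ 2 = ν)
    (f00 : g 0 0 - m * g 0 1 = c) (f11 : g 1 1 + m * g 0 1 = c) (f01 : ν * g 0 1 = sn)
    (hg10 : (g 1 0 + m * (g 0 0 - g 1 1) - m ^ 2 * g 0 1) / ν = -sn)
    (huu : starRingEnd ℂ (⟨c, sn⟩ : ℂ) * ⟨c, sn⟩ = 1) :
    cA (!![d, 0; m / d, 1 / d] * (sg • G) * !![1 / d, 0; -m / d, d])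
      = (sg * starRingEnd ℂ (⟨c, sn⟩ : ℂ)) * (1 + ⟨c, sn⟩ * ((((V 0 0 + V 1 1) / 2 : ℝ) : ℂ)
        + ((((V 1 0 + m * (V 0 0 - V 1 1) - m ^ 2 * V 0 1) / ν - ν * V 0 1) / 2 : ℝ) : ℂ)
          * Complex.I)) ∧
    cB (!![d, 0; m / d, 1 / d] * (sg • G) * !![1 / d, 0; -m / d, d])
      = (sg * starRingEnd ℂ (⟨c, sn⟩ : ℂ)) * (⟨c, sn⟩ *
        ((((V 0 0 - V 1 1 - 2 * m * V 0 1) / 2 : ℝ) : ℂ)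
        + ((((V 1 0 + m * (V 0 0 - V 1 1) - m ^ 2 * V 0 1) / ν + ν * V 0 1) / 2 : ℝ) : ℂ)
          * Complex.I)) := by
  have key : ∀ z : ℂ, (sg * starRingEnd ℂ (⟨c, sn⟩ : ℂ)) * (⟨c, sn⟩ * z) = sg * z := fun z => by
    linear_combination sg * z * huu
  rw [mul_add, mul_one, key, key, Matrix.mul_smul, Matrix.smul_mul, conj_entries d m hd, hd2]
  have f10 : (G 1 0 + m * (G 0 0 - G 1 1) - m ^ 2 * G 0 1) / ν
      = -sn + (V 1 0 + m * (V 0 0 - V 1 1) - m ^ 2 * V 0 1) / ν := by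
    rw [← hg10, hV, hV, hV, hV]; ring
  rw [f10]
  generalize (V 1 0 + m * (V 0 0 - V 1 1) - m ^ 2 * V 0 1) / ν = W
  constructor
  · apply Complex.ext
    · simp [cA, hV, -Complex.ofReal_div, -Complex.ofReal_add, -Complex.ofReal_mul,
        -Complex.ofReal_sub]
      linear_combination sg / 2 * (f00 + f11)
    · simp [cA, hV, -Complex.ofReal_div, -Complex.ofReal_add, -Complex.ofReal_mul,
        -Complex.ofReal_sub]
      linear_combination -sg / 2 * f01
  · apply Complex.ext
    · simp [cB, hV, -Complex.ofReal_div, -Complex.ofReal_add, -Complex.ofReal_mul,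
        -Complex.ofReal_sub]
      linear_combination sg / 2 * (f00 - f11)
    · simp [cB, hV, -Complex.ofReal_div, -Complex.ofReal_add, -Complex.ofReal_mul,
        -Complex.ofReal_sub]
      linear_combination sg / 2 * f01

set_option maxHeartbeats 1000000 in
/-- One step of the disc dynamics for a random perturbation `G` of an elliptic matrix `g`, close to
a parabolic one and with rotation angle of order `θ`, both up to the sign `sg`. The expected increment
of the corrected logarithm is `𝐄 τ²` with `τ = κ θ D₁₀ / (2 sn)`, up to `O(θ³ + κ⁴ / θ)`. -/
lemma elliptic_step {S : Type*} [MeasurableSpace S] (μ : Measure S) [IsProbabilityMeasure μ]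
    {G D : S → Matrix (Fin 2) (Fin 2) ℝ} {g : Matrix (Fin 2) (Fin 2) ℝ} {K κ θ sn sg : ℝ}
    (hK : 1 ≤ K) (hκ : 0 < κ) (hθ : 0 < θ) (hθ1 : θ ≤ 1)
    (hKκ : 3 * (60 * K ^ 3) ^ 2 * κ ≤ 1 / 4) (hKθ : K * θ ^ 2 ≤ 1 / 8)
    (hGm : ∀ i j, Measurable fun s => G s i j) (hDm : ∀ i j, Measurable fun s => D s i j)
    (hD : ∀ s i j, |D s i j| ≤ K) (hDc : ∀ i j, ∫ s, D s i j ∂μ = 0)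
    (hG : ∀ s i j, |G s i j - g i j - κ * θ * D s i j| ≤ K * (κ * θ) * (κ * θ + θ ^ 2))
    (hg00 : |g 0 0 - 1| ≤ K * θ ^ 2) (hg11 : |g 1 1 - 1| ≤ K * θ ^ 2)
    (hg01 : |g 0 1 - 1| ≤ K * θ ^ 2) (hdet : g 0 0 * g 1 1 - g 0 1 * g 1 0 = 1)
    (hsn : 0 < sn) (hsnsq : sn ^ 2 = 1 - ((g 0 0 + g 1 1) / 2) ^ 2)
    (hsn1 : θ ≤ K * sn) (hsn2 : sn ≤ K * θ) (hsg : sg = 1 ∨ sg = -1) :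
    ∃ M N : Matrix (Fin 2) (Fin 2) ℝ, N * M = 1 ∧ ∃ α β : ℂ, ∀ ζ : ℂ, ‖ζ‖ ≤ 1 →
      |(∫ s, stepF α β (cA (M * (sg • G s) * N)) (cB (M * (sg • G s) * N)) ζ ∂μ)
        - ∫ s, (κ * θ * D s 1 0 / (2 * sn)) ^ 2 ∂μ|
        ≤ 400 * (3 * (60 * K ^ 3) ^ 2) ^ 5 * (θ ^ 3 + κ ^ 4 / θ) := by
  have hK0 : 0 < K := by linarith
  have hK3 : 1 ≤ K ^ 3 := one_le_pow₀ hK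
  have hKK3 : K ≤ K ^ 3 := by nlinarith [sq_nonneg (K - 1), sq_nonneg K]
  set A := 60 * K ^ 3 with hA
  have hA1 : 1 ≤ A := by linarith
  have hA2 : 1 ≤ A ^ 2 := one_le_pow₀ hA1
  have hκ1 : κ ≤ 1 := by nlinarith
  have hκθ : 0 < κ * θ := by positivity
  have hθ2 : θ ^ 2 ≤ θ := by nlinarith
  set c := (g 0 0 + g 1 1) / 2 with hc
  have b00 := abs_le.mp hg00
  have b11 := abs_le.mp hg11
  have b01 := abs_le.mp hg01
  have hg01' : |g 0 1 - 1| ≤ 1 / 2 := by linarith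
  have hg0 : 0 < g 0 1 := by linarith
  set m := (g 0 0 - g 1 1) / (2 * g 0 1) with hm
  have hmb : |m| ≤ 2 * K * θ ^ 2 := by
    rw [hm, abs_div, abs_of_pos (show 0 < 2 * g 0 1 by linarith), div_le_iff₀ (by linarith)]
    have : |g 0 0 - g 1 1| ≤ 2 * (K * θ ^ 2) := by rw [abs_le]; constructor <;> linarith
    nlinarith [mul_pos hK0 (pow_pos hθ 2)]
  have hm1 : |m| ≤ 1 := by linarith
  set ν := sn / g 0 1 with hν
  have hν0 : 0 < ν := by positivity
  set d := √ν with hd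
  have hd0 : d ≠ 0 := (Real.sqrt_pos.mpr hν0).ne'
  have hd2 : d ^ 2 = ν := Real.sq_sqrt hν0.le
  have hg10 : (g 1 0 + m * (g 0 0 - g 1 1) - m ^ 2 * g 0 1) / ν = -sn := by
    rw [div_eq_iff hν0.ne', hν, hm]
    have h1 : g 0 1 * g 1 0 = g 0 0 * g 1 1 - 1 := by linarith
    have h2 : sn ^ 2 = 1 - (g 0 0 + g 1 1) ^ 2 / 4 := by rw [hsnsq, hc]; ring
    field_simp
    linear_combination 4 * h1 + 4 * h2
  set V : S → Matrix (Fin 2) (Fin 2) ℝ := fun s => G s - g with hV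
  have hVe : ∀ s i j, G s i j = g i j + V s i j := fun s i j => by simp [hV]
  have hVm : ∀ i j, Measurable fun s => V s i j := fun i j => by
    simp only [hV, Matrix.sub_apply]; exact (hGm i j).sub_const _
  have hVD : ∀ s i j, |V s i j - κ * θ * D s i j| ≤ K * (κ * θ) * (κ * θ + θ ^ 2) := fun s i j => by
    simpa [hV] using hG s i j
  have hVb : ∀ s i j, |V s i j| ≤ 3 * K * (κ * θ) := fun s i j => by
    have h1 := abs_add_le (V s i j - κ * θ * D s i j) (κ * θ * D s i j)
    rw [sub_add_cancel] at h1
    have h2 : |κ * θ * D s i j| ≤ κ * θ * K := by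
      rw [abs_mul, abs_of_pos hκθ]; exact mul_le_mul_of_nonneg_left (hD s i j) hκθ.le
    have h3 : κ * θ + θ ^ 2 ≤ 2 := by nlinarith
    have h4 : K * (κ * θ) * (κ * θ + θ ^ 2) ≤ K * (κ * θ) * 2 := by gcongr
    linarith [hVD s i j]
  have hVint : ∀ i j, Integrable (fun s => V s i j) μ := fun i j =>
    integrable_of_bound (hVm i j) _ (fun s => hVb s i j)
  set ρ := κ ^ 2 * θ + κ * θ ^ 2 with hρ
  have hρ0 : 0 ≤ ρ := by positivity
  have hVi : ∀ i j, |∫ s, V s i j ∂μ| ≤ K * θ * ρ := fun i j => by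
    have h1 := abs_integral_sub_le (hVint i j)
      ((integrable_of_bound (hDm i j) K (fun s => hD s i j)).const_mul (κ * θ)) (μ := μ)
      (fun s => hVD s i j)
    rw [integral_const_mul, hDc, mul_zero, sub_zero] at h1
    refine h1.trans (le_of_eq ?_)
    rw [hρ]; ring
  set PA : S → ℝ := fun s => (V s 0 0 + V s 1 1) / 2 with hPA
  set PB : S → ℝ := fun s => (V s 0 0 - V s 1 1 - 2 * m * V s 0 1) / 2 with hPB
  set W : S → ℝ := fun s => (V s 1 0 + m * (V s 0 0 - V s 1 1) - m ^ 2 * V s 0 1) / ν with hW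
  set QA : S → ℝ := fun s => (W s - ν * V s 0 1) / 2 with hQA
  set QB : S → ℝ := fun s => (W s + ν * V s 0 1) / 2 with hQB
  set τ : S → ℝ := fun s => κ * θ * D s 1 0 / (2 * sn) with hτ
  have cb := fun s => conj_bounds (X := D s 1 0) hK hκ hκ1 hθ hθ1 hsn hsn1 hsn2 hg01 hg01' hν hmb hm1
    (hD s 1 0) (hVb s 0 0) (hVb s 0 1) (hVb s 1 1) (hVD s 1 0)
  have ci := conj_int_bounds hK hθ hθ1 hsn hsn1 hsn2 hg01' hν hm1 hρ0 (hVi 0 0) (hVi 0 1) (hVi 1 1)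
    (hVi 1 0)
  have mW : Measurable W := (((hVm 1 0).add (((hVm 0 0).sub (hVm 1 1)).const_mul m)).sub
    ((hVm 0 1).const_mul (m ^ 2))).div_const ν
  have mPA : Measurable PA := ((hVm 0 0).add (hVm 1 1)).div_const 2
  have mPB : Measurable PB := (((hVm 0 0).sub (hVm 1 1)).sub ((hVm 0 1).const_mul (2 * m))).div_const 2
  have mQA : Measurable QA := (mW.sub ((hVm 0 1).const_mul ν)).div_const 2
  have mQB : Measurable QB := (mW.add ((hVm 0 1).const_mul ν)).div_const 2
  have mτ : Measurable τ := ((hDm 1 0).const_mul (κ * θ)).div_const _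
  have iW : Integrable W μ := (((hVint 1 0).add (((hVint 0 0).sub (hVint 1 1)).const_mul m)).sub
    ((hVint 0 1).const_mul (m ^ 2))).div_const ν
  have i1 : Integrable (fun s => V s 0 0 - V s 1 1) μ := (hVint 0 0).sub (hVint 1 1)
  have i2 : Integrable (fun s => V s 1 0 + m * (V s 0 0 - V s 1 1)) μ := (hVint 1 0).add
    (i1.const_mul m)
  have intW : ∫ s, W s ∂μ = ((∫ s, V s 1 0 ∂μ) + m * ((∫ s, V s 0 0 ∂μ) - ∫ s, V s 1 1 ∂μ)
      - m ^ 2 * ∫ s, V s 0 1 ∂μ) / ν := by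
    simp only [hW]
    rw [integral_div, integral_sub i2 ((hVint 0 1).const_mul (m ^ 2)),
      integral_add (hVint 1 0) (i1.const_mul m), integral_const_mul, integral_const_mul,
      integral_sub (hVint 0 0) (hVint 1 1)]
  have intPA : ∫ s, PA s ∂μ = ((∫ s, V s 0 0 ∂μ) + ∫ s, V s 1 1 ∂μ) / 2 := by
    simp only [hPA]
    rw [integral_div, integral_add (hVint 0 0) (hVint 1 1)]
  have intPB : ∫ s, PB s ∂μ
      = ((∫ s, V s 0 0 ∂μ) - (∫ s, V s 1 1 ∂μ) - 2 * m * ∫ s, V s 0 1 ∂μ) / 2 := by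
    simp only [hPB]
    rw [integral_div, integral_sub i1 ((hVint 0 1).const_mul (2 * m)),
      integral_sub (hVint 0 0) (hVint 1 1), integral_const_mul]
  have intQA : ∫ s, QA s ∂μ = ((∫ s, W s ∂μ) - ν * ∫ s, V s 0 1 ∂μ) / 2 := by
    simp only [hQA]
    rw [integral_div, integral_sub iW ((hVint 0 1).const_mul ν), integral_const_mul]
  have intQB : ∫ s, QB s ∂μ = ((∫ s, W s ∂μ) + ν * ∫ s, V s 0 1 ∂μ) / 2 := by
    simp only [hQB]
    rw [integral_div, integral_add iW ((hVint 0 1).const_mul ν), integral_const_mul]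
  rw [← intW] at ci
  rw [← intPA, ← intPB, ← intQA, ← intQB] at ci
  set u : ℂ := ⟨c, sn⟩ with hu
  have hunsq : Complex.normSq u = 1 := by
    rw [Complex.normSq_apply]; simp only [hu]; nlinarith
  have hu1 : ‖u‖ = 1 := by
    rw [← sq_eq_sq₀ (norm_nonneg _) zero_le_one, ← Complex.normSq_eq_norm_sq, hunsq, one_pow]
  have huu : starRingEnd ℂ u * u = 1 := by
    rw [mul_comm, Complex.mul_conj, hunsq, Complex.ofReal_one]
  have hu2 : ‖u - 1‖ ≤ A * θ := by
    have h1 := Complex.norm_le_abs_re_add_abs_im (u - 1)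
    simp only [hu, Complex.sub_re, Complex.one_re, Complex.sub_im, Complex.one_im, sub_zero] at h1
    rw [abs_of_pos hsn] at h1
    have h2 : |c - 1| ≤ K * θ ^ 2 := by rw [hc, abs_le]; constructor <;> linarith
    have h3 : K * θ ^ 2 ≤ K * θ := by gcongr
    have h4 : 2 * (K * θ) ≤ A * θ := by rw [hA]; nlinarith
    linarith
  set w : ℂ := (sg : ℂ) * starRingEnd ℂ u with hw
  have hsgn : ‖(sg : ℂ)‖ = 1 := by rcases hsg with h | h <;> simp [h]
  have hsg2 : (sg : ℂ) ^ 2 = 1 := by rcases hsg with h | h <;> simp [h]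
  have hwn : ‖w‖ = 1 := by rw [hw, norm_mul, hsgn, RCLike.norm_conj, hu1, one_mul]
  have hc2 : 1 / 2 ≤ c := by rw [hc]; linarith
  have hwsq : w ^ 2 = starRingEnd ℂ u ^ 2 := by rw [hw, mul_pow, hsg2, one_mul]
  have hcu : starRingEnd ℂ u - u = -(2 * sn : ℝ) * Complex.I := by
    apply Complex.ext <;> simp [hu]; ring
  have hcu' : starRingEnd ℂ u + u = (2 * c : ℝ) := by
    apply Complex.ext <;> simp [hu]; ring
  have e2 : w ^ 2 - 1 = starRingEnd ℂ u * (-(2 * sn : ℝ) * Complex.I) := by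
    rw [hwsq, ← hcu]; linear_combination huu
  have e2' : w ^ 2 + 1 = starRingEnd ℂ u * (2 * c : ℝ) := by
    rw [hwsq, ← hcu']; linear_combination -huu
  have n2 : ‖w ^ 2 - 1‖ = 2 * sn := by
    rw [e2, norm_mul, RCLike.norm_conj, hu1, norm_mul, norm_neg, Complex.norm_real, Complex.norm_I,
      Real.norm_eq_abs, abs_of_pos (by linarith)]; ring
  have n2' : ‖w ^ 2 + 1‖ = 2 * c := by
    rw [e2', norm_mul, RCLike.norm_conj, hu1, Complex.norm_real,
      Real.norm_eq_abs, abs_of_pos (by linarith)]; ring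
  have n4 : ‖w ^ 4 - 1‖ = 2 * sn * (2 * c) := by
    rw [← n2, ← n2', ← norm_mul]; congr 1; ring
  have hAA : A ≤ 3 * A ^ 2 := by
    have : A * 1 ≤ A * A := mul_le_mul_of_nonneg_left hA1 (by linarith)
    rw [sq]; linarith
  have hKA : K ≤ 3 * A ^ 2 := by
    linarith
  have hKsn : K * sn ≤ 3 * A ^ 2 * sn := mul_le_mul_of_nonneg_right hKA hsn.le
  have hw2 : θ ≤ 3 * A ^ 2 * ‖w ^ 2 - 1‖ := by
    rw [n2]; linarith [mul_pos hK0 hsn]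
  have hw4 : θ ≤ 3 * A ^ 2 * ‖w ^ 4 - 1‖ := by
    have h1 : 2 * sn ≤ 2 * sn * (2 * c) := le_mul_of_one_le_right (by linarith) (by linarith)
    have h2 : 3 * A ^ 2 * (2 * sn) ≤ 3 * A ^ 2 * (2 * sn * (2 * c)) :=
      mul_le_mul_of_nonneg_left h1 (by linarith)
    rw [n4]; linarith [mul_pos hK0 hsn]
  obtain ⟨ra1, ra2, ra3⟩ := rot_bounds μ hu1 hA1 hκ hθ hθ1 hu2 mPA mQA (τ := τ) (ρ := ρ)
    (fun s => (cb s).1) (fun s => (cb s).2.2.1) (fun s => (cb s).2.2.2.2) ci.1 ci.2.2.1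
  obtain ⟨rb1, rb2, rb3⟩ := rot_bounds μ hu1 hA1 hκ hθ hθ1 hu2 mPB mQB (τ := τ) (ρ := ρ)
    (fun s => (cb s).2.1) (fun s => (cb s).2.2.2.1) (fun s => (cb s).2.2.2.2) ci.2.1 ci.2.2.2
  refine ⟨!![d, 0; m / d, 1 / d], !![1 / d, 0; -m / d, d], ?_,
    -(2 * ((∫ s, τ s ^ 2 ∂μ : ℝ) : ℂ)) / (w ^ 2 - 1), -((∫ s, τ s ^ 2 ∂μ : ℝ) : ℂ) / (w ^ 4 - 1),
    fun ζ hζ => ?_⟩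
  · exact conj_inv d m hd0
  · have main := stepF_integral μ (K := 3 * A ^ 2) hwn (by linarith) hκ hθ hθ1 hKκ
      (a := fun s => u * ((PA s : ℂ) + (QA s : ℂ) * Complex.I))
      (b := fun s => u * ((PB s : ℂ) + (QB s : ℂ) * Complex.I)) (τ := τ)
      (((Complex.measurable_ofReal.comp mPA).add
        ((Complex.measurable_ofReal.comp mQA).mul_const _)).const_mul u)
      (((Complex.measurable_ofReal.comp mPB).add
        ((Complex.measurable_ofReal.comp mQB).mul_const _)).const_mul u) mτ ra1 rb1
      (fun s => ((cb s).2.2.2.2).trans (mul_le_mul_of_nonneg_right hAA hκ.le)) ra2 rb2 ra3 rb3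
      hw2 hw4 hζ
    have f00 : g 0 0 - m * g 0 1 = c := by rw [hm, hc]; field_simp; ring
    have f11 : g 1 1 + m * g 0 1 = c := by rw [hm, hc]; field_simp; ring
    have f01 : ν * g 0 1 = sn := by rw [hν]; field_simp
    have hstep := fun s => conj_cA_cB (V := V s) (hVe s) hd0 hd2 f00 f11 f01 hg10 huu (sg := sg)
    simp only [hstep]
    exact main

end EllipticStep

/-! ### Normal form at the band edge -/

section NormalForm

/-- A real matrix with determinant `1`, trace `2 sg` and different from `sg • 1` is conjugate to `sg`
times a Jordan block. -/
lemma parabolic_form (T : Matrix (Fin 2) (Fin 2) ℝ) (sg : ℝ) (hsg : sg ^ 2 = 1) (hdet : T.det = 1)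
    (htr : T.trace = 2 * sg) (hne : T ≠ sg • (1 : Matrix (Fin 2) (Fin 2) ℝ)) :
    ∃ M N : Matrix (Fin 2) (Fin 2) ℝ, N * M = 1 ∧ sg • (M * T * N) = !![1, 1; 0, 1] := by
  rw [Matrix.det_fin_two] at hdet
  rw [Matrix.trace_fin_two] at htr
  set p := sg * T 0 0 with hp
  set q := sg * T 0 1 with hq
  set r := sg * T 1 0 with hr
  set u := sg * T 1 1 with hu
  have hT : sg • T = !![p, q; r, u] := by
    ext i j; fin_cases i <;> fin_cases j <;> simp [hp, hq, hr, hu]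
  have h1 : p * u - q * r = 1 := by
    rw [hp, hq, hr, hu]; linear_combination sg ^ 2 * hdet + hsg
  have h2 : p + u = 2 := by rw [hp, hu]; linear_combination sg * htr + 2 * hsg
  have hpull : ∀ M N : Matrix (Fin 2) (Fin 2) ℝ, sg • (M * T * N) = M * (sg • T) * N := fun M N => by
    rw [Matrix.mul_smul, Matrix.smul_mul]
  by_cases hq0 : q = 0
  · have hpu : (p - 1) ^ 2 = 0 := by
      rw [hq0] at h1; linear_combination -h1 + p * h2
    have hp1 : p = 1 := by have := pow_eq_zero_iff (two_ne_zero) |>.mp hpu; linarith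
    have hu1 : u = 1 := by linarith
    have hr0 : r ≠ 0 := by
      intro h
      apply hne
      have : sg • (sg • T) = sg • (1 : Matrix (Fin 2) (Fin 2) ℝ) := by
        rw [hT, hp1, hq0, h, hu1, ← Matrix.one_fin_two]
      rwa [smul_smul, ← sq, hsg, one_smul] at this
    refine ⟨!![0, 1; r, 0], !![0, 1 / r; 1, 0], ?_, ?_⟩
    · rw [Matrix.mul_fin_two, Matrix.one_fin_two]
      ext i j; fin_cases i <;> fin_cases j <;> simp [hr0]
    · rw [hpull, hT, Matrix.mul_fin_two, Matrix.mul_fin_two, hp1, hq0, hu1]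
      ext i j; fin_cases i <;> fin_cases j <;> simp [hr0]
  · have hu' : u = 2 - p := by linarith
    have hr' : r = (p * (2 - p) - 1) / q := by
      rw [eq_div_iff hq0]; rw [hu'] at h1; linarith
    refine ⟨!![1, 0; p - 1, q], !![1, 0; (1 - p) / q, 1 / q], ?_, ?_⟩
    · rw [Matrix.mul_fin_two, Matrix.one_fin_two]
      ext i j; fin_cases i <;> fin_cases j <;> simp [hq0]
      field_simp; ring
    · rw [hpull, hT, Matrix.mul_fin_two, Matrix.mul_fin_two, hu', hr']
      ext i j
      fin_cases i <;> fin_cases j <;> simp <;> field_simp <;> ring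

/-- Expansion of a random matrix family around a parabolic point, in a basis where the unperturbed
matrix is `sg` times a Jordan block. The lower left entry of the noise is then, up to sign, the
derivative `xσ` of the trace. -/
lemma normal_form {S : Type*} [MeasurableSpace S] (μ : Measure S) [IsProbabilityMeasure μ]
    {T : ℝ → ℝ → S → Matrix (Fin 2) (Fin 2) ℝ} (hT : ∀ i j, Good μ fun l e s => T l e s i j)
    {r1 : ℝ} (hr1 : 0 < r1) (hdet : ∀ l e s, |l| < r1 → (T l e s).det = 1)
    (htr : ∀ s, |(T 0 0 s).trace| = 2) {x : ℝ} (hxne : x ≠ 0) {xσ : S → ℝ}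
    (hx : ∀ s, HasDerivAt (fun e => (T 0 e s).trace) x 0)
    (hxσ : ∀ s, HasDerivAt (fun l => (T l 0 s).trace) (xσ s) 0) :
    ∃ sg : ℝ, (sg = 1 ∨ sg = -1) ∧ ∃ M N : Matrix (Fin 2) (Fin 2) ℝ, N * M = 1 ∧
    ∃ (g : ℝ → Matrix (Fin 2) (Fin 2) ℝ) (D : S → Matrix (Fin 2) (Fin 2) ℝ), ∃ K ≥ (1 : ℝ),
    ∃ r > (0 : ℝ),
      (∀ i j, Measurable fun s => D s i j) ∧ (∀ s i j, |D s i j| ≤ K) ∧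
      (∀ i j, ∫ s, D s i j ∂μ = 0) ∧ (∀ s, D s 1 0 = sg * xσ s) ∧
      (∀ e, |e| < r → |g e 0 0 - 1| ≤ K * |e| ∧ |g e 1 1 - 1| ≤ K * |e| ∧ |g e 0 1 - 1| ≤ K * |e| ∧
        |g e 0 0 + g e 1 1 - 2 - sg * x * e| ≤ K * e ^ 2 ∧
        g e 0 0 * g e 1 1 - g e 0 1 * g e 1 0 = 1 ∧
        ∀ s, g e 0 0 + g e 1 1 = sg * (T 0 e s).trace) ∧
      ∀ l e s i j, |l| < r → |e| < r →
        |(sg • (M * T l e s * N)) i j - g e i j - l * D s i j| ≤ K * (|l| * (|l| + |e|)) := by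
  obtain ⟨s0⟩ : Nonempty S := μ.nonempty_of_neZero
  choose g' f0' f1' D' hT' using hT
  have hconst : ∀ s, T 0 0 s = T 0 0 s0 := fun s => by
    ext i j; rw [(hT' i j).f_zero s, (hT' i j).f_zero s0]
  set T0 := T 0 0 s0 with hT0
  have h0r : |(0 : ℝ)| < r1 := by simpa using hr1
  obtain ⟨sg, hsg, htr0⟩ : ∃ sg : ℝ, (sg = 1 ∨ sg = -1) ∧ T0.trace = 2 * sg := by
    rcases (abs_eq (by norm_num : (0 : ℝ) ≤ 2)).mp (htr s0) with h | h
    · exact ⟨1, Or.inl rfl, by rw [hT0, h]; ring⟩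
    · exact ⟨-1, Or.inr rfl, by rw [hT0, h]; ring⟩
  have hsg2 : sg ^ 2 = 1 := by rcases hsg with h | h <;> simp [h]
  have hsg0 : sg ≠ 0 := by rintro rfl; norm_num at hsg2
  -- band touching is the only way for the monodromy matrix to be a multiple of the identity
  have hne : T0 ≠ sg • (1 : Matrix (Fin 2) (Fin 2) ℝ) := by
    intro h
    have d1 := ((hT' 0 0).mul (hT' 1 1)).add
      ((hasExp_const μ (-1)).mul ((hT' 0 1).mul (hT' 1 0))) |>.hasDerivAt_energy s0
    have d2 : HasDerivAt (fun e => T 0 e s0 0 0 * T 0 e s0 1 1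
        + -1 * (T 0 e s0 0 1 * T 0 e s0 1 0)) 0 0 := by
      have : (fun e => T 0 e s0 0 0 * T 0 e s0 1 1 + -1 * (T 0 e s0 0 1 * T 0 e s0 1 0))
          = fun _ => 1 := by
        funext e
        have := hdet 0 e s0 h0r
        rw [Matrix.det_fin_two] at this
        linarith
      rw [this]; exact hasDerivAt_const _ _
    have d3 := d1.unique d2
    have d4 := ((hT' 0 0).add (hT' 1 1)).hasDerivAt_energy s0
    have d5 := hx s0
    simp only [Matrix.trace_fin_two] at d5
    have d6 := d4.unique d5
    have e00 : f0' 0 0 = sg := by rw [← (hT' 0 0).f_zero s0, ← hT0, h]; simp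
    have e11 : f0' 1 1 = sg := by rw [← (hT' 1 1).f_zero s0, ← hT0, h]; simp
    have e01 : f0' 0 1 = 0 := by rw [← (hT' 0 1).f_zero s0, ← hT0, h]; simp
    have e10 : f0' 1 0 = 0 := by rw [← (hT' 1 0).f_zero s0, ← hT0, h]; simp
    rw [e00, e11, e01, e10] at d3
    apply hxne
    have : sg * x = 0 := by rw [← d6]; linarith
    exact (mul_eq_zero.mp this).resolve_left hsg0
  obtain ⟨M, N, hNM, hJ⟩ := parabolic_form T0 sg hsg2 (hdet 0 0 s0 h0r) htr0 hne
  set G : ℝ → ℝ → S → Matrix (Fin 2) (Fin 2) ℝ := fun l e s => sg • (M * T l e s * N) with hG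
  have hMN : M * N = 1 := mul_eq_one_comm.mp hNM
  have hGtr : ∀ l e s, (G l e s).trace = sg * (T l e s).trace := fun l e s => by
    rw [hG, Matrix.trace_smul, Matrix.trace_mul_comm, ← mul_assoc, hNM, one_mul, smul_eq_mul]
  have hGdet : ∀ l e s, |l| < r1 → (G l e s).det = 1 := fun l e s hl => by
    rw [hG, Matrix.det_smul, Matrix.det_mul, Matrix.det_mul, hdet l e s hl, mul_one,
      ← Matrix.det_mul, hMN, Matrix.det_one, Fintype.card_fin, hsg2, one_mul]
  have hGgood : ∀ i j, Good μ fun l e s => G l e s i j := fun i j => by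
    have h1 := good_matMul (μ := μ) (F := fun _ _ _ => M) (G := T) (fun i j => good_const μ (M i j))
      (fun i j => ⟨_, _, _, _, hT' i j⟩)
    have h2 := good_matMul (μ := μ) h1 (G := fun _ _ _ => N) (fun i j => good_const μ (N i j)) i j
    have h3 := (good_const μ sg).mul h2
    simpa [hG] using h3
  choose g f0 f1 D hE using hGgood
  have hf0 : ∀ i j, f0 i j = (!![1, 1; 0, 1] : Matrix (Fin 2) (Fin 2) ℝ) i j := fun i j => by
    rw [← (hE i j).f_zero s0, hG]; simp only; rw [← hT0, hJ]
  have e00 : f0 0 0 = 1 := by rw [hf0]; simp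
  have e11 : f0 1 1 = 1 := by rw [hf0]; simp
  have e01 : f0 0 1 = 1 := by rw [hf0]; simp
  have e10 : f0 1 0 = 0 := by rw [hf0]; simp
  have hf1 : f1 0 0 + f1 1 1 = sg * x := by
    have d4 := ((hE 0 0).add (hE 1 1)).hasDerivAt_energy s0
    have d5 := (hx s0).const_mul sg
    simp only [← hGtr] at d5
    simp only [Matrix.trace_fin_two] at d5
    exact d4.unique d5
  have hD1 : ∀ s, D 0 0 s + D 1 1 s = sg * xσ s := fun s => by
    have d4 := ((hE 0 0).add (hE 1 1)).hasDerivAt_lam s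
    have d5 := (hxσ s).const_mul sg
    simp only [← hGtr] at d5
    simp only [Matrix.trace_fin_two] at d5
    exact d4.unique d5
  have hD2 : ∀ s, D 1 0 s = sg * xσ s := fun s => by
    have d1 := ((hE 0 0).mul (hE 1 1)).add
      ((hasExp_const μ (-1)).mul ((hE 0 1).mul (hE 1 0))) |>.hasDerivAt_lam s
    have d2 : HasDerivAt (fun l => G l 0 s 0 0 * G l 0 s 1 1
        + -1 * (G l 0 s 0 1 * G l 0 s 1 0)) 0 0 := by
      refine (hasDerivAt_const (0 : ℝ) (1 : ℝ)).congr_of_eventuallyEq ?_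
      filter_upwards [Metric.ball_mem_nhds (0 : ℝ) hr1] with l hl
      have := hGdet l 0 s (by simpa using hl)
      rw [Matrix.det_fin_two] at this
      linarith
    have d3 := d1.unique d2
    rw [e00, e11, e01, e10] at d3
    rw [← hD1 s]; linarith
  choose C hC r hr hCD hCg hCf using fun i j => (hE i j).exists_bounds
  obtain ⟨b00, b01, b10, b11⟩ : 0 < C 0 0 ∧ 0 < C 0 1 ∧ 0 < C 1 0 ∧ 0 < C 1 1 :=
    ⟨hC _ _, hC _ _, hC _ _, hC _ _⟩
  set K := 1 + C 0 0 + C 0 1 + C 1 0 + C 1 1 with hK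
  have hCK : ∀ i j, C i j ≤ K := fun i j => by
    fin_cases i <;> fin_cases j <;> simp only [Fin.zero_eta, Fin.mk_one, Fin.isValue, hK] <;> linarith
  set R := min (min (r 0 0) (r 0 1)) (min (r 1 0) (r 1 1)) with hR
  have hRr : ∀ i j, R ≤ r i j := fun i j => by
    fin_cases i <;> fin_cases j <;> simp [hR]
  refine ⟨sg, hsg, M, N, hNM, fun e => Matrix.of fun i j => g i j e,
    fun s => Matrix.of fun i j => D i j s, K, by linarith, R,
    lt_min (lt_min (hr _ _) (hr _ _)) (lt_min (hr _ _) (hr _ _)), fun i j => (hE i j).meas,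
    fun s i j => (hCD i j s).trans (hCK i j), fun i j => (hE i j).cent, hD2, fun e he => ?_,
    fun l e s i j hl he => ?_⟩
  · have hge : ∀ s i j, G 0 e s i j = g i j e := fun s i j => by
      have := hCf i j 0 e s (by simpa using hr i j) (he.trans_le (hRr i j))
      simp only [abs_zero, zero_mul, sub_zero, mul_zero] at this
      linarith [abs_nonpos_iff.mp this]
    have hb : ∀ i j, |g i j e - f0 i j| ≤ K * |e| := fun i j =>
      ((hCg i j e (he.trans_le (hRr i j))).2).trans
        (mul_le_mul_of_nonneg_right (hCK i j) (abs_nonneg e))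
    simp only [Matrix.of_apply]
    refine ⟨by simpa [e00] using hb 0 0, by simpa [e11] using hb 1 1, by simpa [e01] using hb 0 1,
      ?_, ?_, fun s => ?_⟩
    · have a := (hCg 0 0 e (he.trans_le (hRr 0 0))).1
      have b := (hCg 1 1 e (he.trans_le (hRr 1 1))).1
      rw [e00] at a
      rw [e11] at b
      rw [← hf1]
      have a' := abs_le.mp a
      have b' := abs_le.mp b
      have k : (C 0 0 + C 1 1) * e ^ 2 ≤ K * e ^ 2 :=
        mul_le_mul_of_nonneg_right (by linarith) (sq_nonneg e)
      rw [abs_le]; constructor <;> linarith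
    · have := hGdet 0 e s0 h0r
      rwa [Matrix.det_fin_two, hge, hge, hge, hge] at this
    · rw [← hGtr, Matrix.trace_fin_two, hge, hge]
  · refine (hCf i j l e s (hl.trans_le (hRr i j)) (he.trans_le (hRr i j))).trans ?_
    exact mul_le_mul_of_nonneg_right (hCK i j) (by positivity)

end NormalForm

/-! ### The Lyapunov exponent in the scaling variables -/

section Scaling

lemma matNorm_le_of_entries {m : Matrix (Fin 2) (Fin 2) ℝ} {B : ℝ} (hB : ∀ i j, |m i j| ≤ B) :
    matNorm m ≤ 2 * B := by
  have hB0 : 0 ≤ B := (abs_nonneg _).trans (hB 0 0)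
  have h : ∀ i j, m i j ^ 2 ≤ B ^ 2 := fun i j => sq_le_sq' (abs_le.mp (hB i j)).1 (abs_le.mp (hB i j)).2
  apply le_of_sq_le_sq _ (by positivity)
  rw [matNorm_sq]
  nlinarith [h 0 0, h 0 1, h 1 0, h 1 1]

lemma eventually_mul_lt (B : ℝ) {b : ℝ} (hb : 0 < b) : ∀ᶠ ρ in nhdsWithin (0 : ℝ) (Ioi 0), B * ρ < b := by
  have : Tendsto (fun ρ : ℝ => B * ρ) (nhdsWithin 0 (Ioi 0)) (nhds (B * 0)) :=
    ((continuous_const.mul continuous_id).tendsto 0).mono_left nhdsWithin_le_nhds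
  rw [mul_zero] at this
  exact this.eventually (gt_mem_nhds hb)

/-- The sine of the rotation angle: if `2 c` is the trace of an elliptic matrix and
`2 c = 2 + a θ² + O(θ⁴)` with `a ≠ 0`, then `a` must be negative, and `1 - c² = |a| θ² + O(θ⁴)`. -/
lemma sin_sq_bounds {a c K θ w : ℝ} (hw : w = |a|) (ha : a ≠ 0) (hK : 0 ≤ K) (hθ : 0 < θ) (hθ1 : θ ≤ 1)
    (hc : |c| < 1) (h : |2 * c - 2 - a * θ ^ 2| ≤ K * θ ^ 4) (hs : K * θ ≤ w / 4)
    (hs' : (K + w ^ 2) * θ ≤ w / 2) :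
    |1 - c ^ 2 - w * θ ^ 2| ≤ (K + w ^ 2) * θ ^ 4 ∧ w / 2 * θ ^ 2 ≤ 1 - c ^ 2 ∧
      1 - c ^ 2 ≤ 3 * w / 2 * θ ^ 2 := by
  have hw0 : 0 < w := hw ▸ abs_pos.mpr ha
  obtain ⟨c1, c2⟩ := abs_lt.mp hc
  obtain ⟨h1, h2⟩ := abs_le.mp h
  have hθ2 : 0 < θ ^ 2 := by positivity
  have hθθ : θ ^ 2 ≤ θ := by nlinarith
  have hK4 : K * θ ^ 4 ≤ w / 4 * θ ^ 2 := by
    have : K * θ ^ 2 ≤ w / 4 := (mul_le_mul_of_nonneg_left hθθ hK).trans hs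
    calc K * θ ^ 4 = K * θ ^ 2 * θ ^ 2 := by ring
      _ ≤ _ := mul_le_mul_of_nonneg_right this hθ2.le
  have haneg : a < 0 := by
    by_contra hcon
    push Not at hcon
    have hwa : w = a := by rw [hw, abs_of_nonneg hcon]
    have : w * θ ^ 2 < w / 4 * θ ^ 2 := by rw [hwa] at hK4 ⊢; linarith
    nlinarith
  have hwa : a = -w := by rw [hw, abs_of_neg haneg]; ring
  rw [hwa] at h1 h2
  have hd0 : 0 ≤ 1 - c := by linarith
  have hd1 : 1 - c ≤ w * θ ^ 2 := by nlinarith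
  have hdsq : (1 - c) ^ 2 ≤ w ^ 2 * θ ^ 4 := by
    calc (1 - c) ^ 2 ≤ (w * θ ^ 2) ^ 2 := pow_le_pow_left₀ hd0 hd1 2
      _ = _ := by ring
  have hmain : |1 - c ^ 2 - w * θ ^ 2| ≤ (K + w ^ 2) * θ ^ 4 := by
    have := sq_nonneg (1 - c)
    rw [abs_le]; constructor <;> nlinarith
  have hQ : (K + w ^ 2) * θ ^ 4 ≤ w / 2 * θ ^ 2 := by
    have : (K + w ^ 2) * θ ^ 2 ≤ w / 2 :=
      (mul_le_mul_of_nonneg_left hθθ (by positivity)).trans hs'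
    calc (K + w ^ 2) * θ ^ 4 = (K + w ^ 2) * θ ^ 2 * θ ^ 2 := by ring
      _ ≤ _ := mul_le_mul_of_nonneg_right this hθ2.le
  obtain ⟨m1, m2⟩ := abs_le.mp hmain
  exact ⟨hmain, by linarith, by linarith⟩

lemma sq_mul_sq_le (κ : ℝ) {θ : ℝ} (hθ : 0 < θ) (hθ1 : θ ≤ 1) :
    κ ^ 2 * θ ^ 2 ≤ θ ^ 3 + κ ^ 4 / θ := by
  have h1 : θ ^ 3 + κ ^ 4 / θ = (θ ^ 4 + κ ^ 4) / θ := by field_simp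
  rw [h1, le_div_iff₀ hθ]
  have h2 : κ ^ 2 * θ ^ 2 * θ ≤ κ ^ 2 * θ ^ 2 := mul_le_of_le_one_right (by positivity) hθ1
  nlinarith [sq_nonneg (θ ^ 2 - κ ^ 2), sq_nonneg (κ * θ)]

/-- Replacing `sn²` by its leading term `w θ²` in the mean increment costs `O(κ² θ²)`. -/
lemma abs_variance_sub_le (κ : ℝ) {V w Q θ sn c : ℝ} (hV0 : 0 ≤ V) (hw0 : 0 < w) (hQ0 : 0 < Q)
    (hθ : 0 < θ) (hsnsq : sn ^ 2 = 1 - c ^ 2) (s1 : |1 - c ^ 2 - w * θ ^ 2| ≤ Q * θ ^ 4)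
    (s2 : w / 2 * θ ^ 2 ≤ 1 - c ^ 2) :
    |(κ * θ) ^ 2 / (4 * sn ^ 2) * V / 2 - κ ^ 2 * V / (8 * w)|
      ≤ V * Q / (4 * w ^ 2) * (κ ^ 2 * θ ^ 2) := by
  rw [← hsnsq] at s1 s2
  have hpos : 0 < sn ^ 2 := lt_of_lt_of_le (by positivity) s2
  have hsn : sn ≠ 0 := fun h => by simp [h] at hpos
  have h1 : (κ * θ) ^ 2 / (4 * sn ^ 2) * V / 2 - κ ^ 2 * V / (8 * w)
      = -(κ ^ 2 * V / (8 * w * sn ^ 2)) * (sn ^ 2 - w * θ ^ 2) := by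
    field_simp; ring
  rw [h1, abs_mul, abs_neg, abs_of_nonneg (by positivity)]
  have h2 : κ ^ 2 * V / (8 * w * sn ^ 2) ≤ κ ^ 2 * V / (8 * w * (w / 2 * θ ^ 2)) := by
    gcongr
  calc κ ^ 2 * V / (8 * w * sn ^ 2) * |sn ^ 2 - w * θ ^ 2|
      ≤ κ ^ 2 * V / (8 * w * (w / 2 * θ ^ 2)) * (Q * θ ^ 4) :=
        mul_le_mul h2 s1 (abs_nonneg _) (by positivity)
    _ = _ := by field_simp; ring

set_option maxHeartbeats 800000 in
/-- Asymptotics of the Lyapunov exponent per cell in the scaling variables `θ = lam ^ (η / 2)` and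
`κ = lam ^ (1 - η / 2)`, so that `lam = κ θ` and the energy offset is `ε θ²`. -/
lemma lyapunov_scaling {S : Type*} [MeasurableSpace S] (μ : Measure S) [IsProbabilityMeasure μ]
    {T : ℝ → ℝ → S → Matrix (Fin 2) (Fin 2) ℝ} (hT : ∀ i j, Good μ fun l e s => T l e s i j)
    (hTm : ∀ l e i j, Measurable fun s => T l e s i j)
    {r1 : ℝ} (hr1 : 0 < r1) (hdet : ∀ l e s, |l| < r1 → (T l e s).det = 1)
    (htr : ∀ s, |(T 0 0 s).trace| = 2) {x : ℝ} (hxne : x ≠ 0) {xσ : S → ℝ}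
    (hx : ∀ s, HasDerivAt (fun e => (T 0 e s).trace) x 0)
    (hxσ : ∀ s, HasDerivAt (fun l => (T l 0 s).trace) (xσ s) 0) {ε : ℝ} (hε : ε ≠ 0) :
    ∃ C > (0 : ℝ), ∃ ρ > (0 : ℝ), ∀ θ κ : ℝ, 0 < θ → θ < ρ → 0 < κ → κ < ρ →
      (∀ s, |(T 0 (ε * θ ^ 2) s).trace| < 2) →
      ∃ g : ℝ, Tendsto (fun n : ℕ =>
        (∫ ω, Real.log (matNorm (prodT (T (κ * θ) (ε * θ ^ 2)) n ω))
          ∂(Measure.pi fun _ : Fin n => μ)) / n) atTop (nhds g) ∧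
        |g - κ ^ 2 * (∫ s, xσ s ^ 2 ∂μ) / (8 * |ε * x|)| ≤ C * (θ ^ 3 + κ ^ 4 / θ) := by
  obtain ⟨s0⟩ : Nonempty S := μ.nonempty_of_neZero
  obtain ⟨sg, hsg, Mb, Nb, hNMb, g, D, K, hK, r, hr, hDm, hD, hDc, hD10, hg, hexp⟩ :=
    normal_form μ hT hr1 hdet htr hxne hx hxσ
  have hsg2 : sg * sg = 1 := by rcases hsg with h | h <;> simp [h]
  have hsg0 : sg ≠ 0 := by rintro rfl; norm_num at hsg2
  have hsga : |sg| = 1 := by rcases hsg with h | h <;> simp [h]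
  set w := |ε * x| with hw
  have hw0 : 0 < w := abs_pos.mpr (mul_ne_zero hε hxne)
  set V := ∫ s, xσ s ^ 2 ∂μ with hV
  have hV0 : 0 ≤ V := integral_nonneg fun s => sq_nonneg _
  set Q := K * ε ^ 2 + w ^ 2 with hQ
  have hQ0 : 0 < Q := by positivity
  set K' := K * (1 + |ε|) + 2 / w + 2 * w with hK'
  have hKε : K ≤ K * (1 + |ε|) := le_mul_of_one_le_right (by linarith) (by linarith [abs_nonneg ε])
  have hKε' : K * |ε| ≤ K * (1 + |ε|) := mul_le_mul_of_nonneg_left (by linarith) (by linarith)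
  have hw2 : 0 < 2 / w := by positivity
  clear_value K' Q V w
  have hKK' : K ≤ K' := by linarith
  have hK'1 : 1 ≤ K' := by linarith
  have hKεK' : K * |ε| ≤ K' := by linarith
  have hKKεK' : K * (1 + |ε|) ≤ K' := by linarith
  obtain ⟨ρ, hρ1, hρr1, hρr, hρε, hρ2, hρ3, hρ4, hρ5, hρ0⟩ :=
    ((eventually_mul_lt 1 one_pos).and <| (eventually_mul_lt 1 hr1).and <|
      (eventually_mul_lt 1 hr).and <| (eventually_mul_lt |ε| hr).and <|
      (eventually_mul_lt (K * ε ^ 2) (show 0 < w / 4 by positivity)).and <|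
      (eventually_mul_lt Q (show 0 < w / 2 by positivity)).and <|
      (eventually_mul_lt (3 * (60 * K' ^ 3) ^ 2) (show (0 : ℝ) < 1 / 4 by norm_num)).and <|
      (eventually_mul_lt K' (show (0 : ℝ) < 1 / 8 by norm_num)).and self_mem_nhdsWithin).exists
  rw [one_mul] at hρ1 hρr1 hρr
  refine ⟨200 * (3 * (60 * K' ^ 3) ^ 2) ^ 5 + V * Q / (4 * w ^ 2), by positivity, ρ, hρ0, ?_⟩
  intro θ κ hθ hθρ hκ hκρ hin
  have hθ1 : θ ≤ 1 := by linarith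
  have hκ1 : κ ≤ 1 := by linarith
  have hθθ : θ ^ 2 ≤ θ := by nlinarith
  have hl0 : 0 < κ * θ := by positivity
  have hlρ : |κ * θ| < ρ := by rw [abs_of_pos hl0]; nlinarith
  have heθ : |ε * θ ^ 2| = |ε| * θ ^ 2 := by rw [abs_mul, abs_of_nonneg (sq_nonneg θ)]
  have her : |ε * θ ^ 2| < r := by
    rw [heθ]
    have : |ε| * θ ^ 2 ≤ |ε| * ρ := mul_le_mul_of_nonneg_left (by linarith) (abs_nonneg _)
    linarith
  obtain ⟨a00, a11, a01, atr, adet, atr'⟩ := hg (ε * θ ^ 2) her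
  rw [heθ] at a00 a11 a01
  set e := ε * θ ^ 2 with he
  set c := (g e 0 0 + g e 1 1) / 2 with hc
  have hc1 : |c| < 1 := by
    have := hin s0
    rw [hc, atr' s0, abs_div, abs_mul, hsga, abs_two]
    linarith
  have ha : sg * x * ε ≠ 0 := by positivity
  have hwa : w = |sg * x * ε| := by
    rw [hw, mul_assoc, abs_mul sg, hsga, one_mul, mul_comm]
  obtain ⟨s1, s2, s3⟩ := sin_sq_bounds (a := sg * x * ε) (c := c) (K := K * ε ^ 2) (θ := θ) hwa ha
    (by positivity) hθ hθ1 hc1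
    (by
      have h1 : 2 * c - 2 - sg * x * ε * θ ^ 2 = g e 0 0 + g e 1 1 - 2 - sg * x * e := by
        rw [hc, he]; ring
      rw [h1]; refine atr.trans (le_of_eq ?_); rw [he]; ring)
    ((mul_le_mul_of_nonneg_left hθρ.le (by positivity)).trans hρ2.le)
    ((mul_le_mul_of_nonneg_left hθρ.le (by positivity)).trans
      (by rw [← hQ]; exact hρ3.le))
  rw [← hQ] at s1
  clear_value c e
  have hpos : 0 < 1 - c ^ 2 := lt_of_lt_of_le (by positivity) s2
  set sn := √(1 - c ^ 2) with hsn
  have hsnsq : sn ^ 2 = 1 - c ^ 2 := Real.sq_sqrt hpos.le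
  have hsn0 : 0 < sn := Real.sqrt_pos.mpr hpos
  clear_value sn
  have hK'sq : K' ≤ K' ^ 2 := by nlinarith
  have hsn1 : θ ≤ K' * sn := by
    apply le_of_sq_le_sq _ (by positivity)
    rw [mul_pow, hsnsq]
    have h1 : 2 / w ≤ K' ^ 2 := by
      refine le_trans ?_ hK'sq
      have : 0 < K * (1 + |ε|) := by positivity
      linarith
    calc θ ^ 2 = 2 / w * (w / 2 * θ ^ 2) := by field_simp
      _ ≤ K' ^ 2 * (1 - c ^ 2) := mul_le_mul h1 s2 (by positivity) (by positivity)
  have hsn2 : sn ≤ K' * θ := by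
    apply le_of_sq_le_sq _ (by positivity)
    rw [mul_pow, hsnsq]
    refine s3.trans (mul_le_mul_of_nonneg_right ?_ (sq_nonneg _))
    refine le_trans ?_ hK'sq
    have : 0 < K * (1 + |ε|) := by positivity
    linarith
  have hKθ : ∀ {y : ℝ}, |y| ≤ K * (|ε| * θ ^ 2) → |y| ≤ K' * θ ^ 2 := fun h => by
    refine h.trans ?_
    rw [← mul_assoc]
    exact mul_le_mul_of_nonneg_right hKεK' (sq_nonneg _)
  set G : S → Matrix (Fin 2) (Fin 2) ℝ := fun s => sg • (Mb * T (κ * θ) e s * Nb) with hG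
  have hGm : ∀ i j, Measurable fun s => G s i j := fun i j => by
    have h1 := measurable_matMul (m := fun _ : S => Mb) (fun i j => measurable_const)
      (hTm (κ * θ) e)
    have h2 := measurable_matMul h1 (n := fun _ : S => Nb) (fun i j => measurable_const) i j
    exact h2.const_mul sg
  have hGb : ∀ s i j, |G s i j - g e i j - κ * θ * D s i j|
      ≤ K' * (κ * θ) * (κ * θ + θ ^ 2) := fun s i j => by
    refine (hexp (κ * θ) e s i j (hlρ.trans hρr) her).trans ?_
    rw [heθ, abs_of_pos hl0]
    have h1 : K * (κ * θ + |ε| * θ ^ 2) ≤ K' * (κ * θ + θ ^ 2) := by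
      have h2 : K * (κ * θ) ≤ K' * (κ * θ) := mul_le_mul_of_nonneg_right hKK' hl0.le
      have h3 : K * |ε| * θ ^ 2 ≤ K' * θ ^ 2 := mul_le_mul_of_nonneg_right hKεK' (sq_nonneg _)
      linarith
    calc K * (κ * θ * (κ * θ + |ε| * θ ^ 2)) = κ * θ * (K * (κ * θ + |ε| * θ ^ 2)) := by ring
      _ ≤ κ * θ * (K' * (κ * θ + θ ^ 2)) := mul_le_mul_of_nonneg_left h1 hl0.le
      _ = _ := by ring
  obtain ⟨Md, Nd, hNMd, α, β, hstep⟩ := elliptic_step μ (G := G) (D := D) (g := g e) (K := K')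
    (κ := κ) (θ := θ) (sn := sn) (sg := sg) hK'1 hκ hθ hθ1
    ((mul_le_mul_of_nonneg_left hκρ.le (by positivity)).trans hρ4.le)
    ((mul_le_mul_of_nonneg_left (hθθ.trans hθρ.le) (by positivity)).trans hρ5.le)
    hGm hDm (fun s i j => (hD s i j).trans hKK') hDc hGb (hKθ a00) (hKθ a11) (hKθ a01) adet
    hsn0 (hc ▸ hsnsq) hsn1 hsn2 hsg
  have hMT : ∀ s, sg • G s = Mb * T (κ * θ) e s * Nb := fun s => by
    rw [hG]; simp only; rw [smul_smul, hsg2, one_smul]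
  have hconj : ∀ s, Md * (sg • G s) * Nd = Md * Mb * T (κ * θ) e s * (Nb * Nd) := fun s => by
    rw [hMT]; simp only [mul_assoc]
  simp only [hconj] at hstep
  -- a crude uniform bound on the transfer matrices, allowed to depend on `θ` and `κ`
  obtain ⟨B, hB⟩ : ∃ B, ∀ s, matNorm (T (κ * θ) e s) ≤ B := by
    set b := (|g e 0 0| + |g e 0 1| + |g e 1 0| + |g e 1 1|) + κ * θ * K'
      + K' * (κ * θ) * (κ * θ + θ ^ 2) with hb
    have hgb : ∀ i j, |g e i j| ≤ |g e 0 0| + |g e 0 1| + |g e 1 0| + |g e 1 1| := fun i j => by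
      have h00 := abs_nonneg (g e 0 0)
      have h01 := abs_nonneg (g e 0 1)
      have h10 := abs_nonneg (g e 1 0)
      have h11 := abs_nonneg (g e 1 1)
      fin_cases i <;> fin_cases j <;> simp only [Fin.zero_eta, Fin.mk_one, Fin.isValue] <;> linarith
    refine ⟨matNorm Nb * (2 * b) * matNorm Mb, fun s => ?_⟩
    have hTe : T (κ * θ) e s = Nb * (sg • G s) * Mb := by
      rw [hMT]
      calc T (κ * θ) e s = (Nb * Mb) * T (κ * θ) e s * (Nb * Mb) := by rw [hNMb]; simp
        _ = _ := by simp only [mul_assoc]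
    have hGe : matNorm (sg • G s) ≤ 2 * b := matNorm_le_of_entries fun i j => by
      rw [Matrix.smul_apply, smul_eq_mul, abs_mul, hsga, one_mul]
      have h1 := hGb s i j
      have h2 : |κ * θ * D s i j| ≤ κ * θ * K' := by
        rw [abs_mul, abs_of_pos hl0]
        exact mul_le_mul_of_nonneg_left ((hD s i j).trans hKK') hl0.le
      have h3 : G s i j = (G s i j - g e i j - κ * θ * D s i j) + g e i j + κ * θ * D s i j := by ring
      rw [h3]
      refine (abs_add_three _ _ _).trans ?_
      linarith [hgb i j]
    rw [hTe]
    refine (matNorm_mul_le _ _).trans ?_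
    refine mul_le_mul_of_nonneg_right ?_ (matNorm_nonneg _)
    exact (matNorm_mul_le _ _).trans (mul_le_mul_of_nonneg_left hGe (matNorm_nonneg _))
  obtain ⟨γ, hγ, hγ'⟩ := lyapunov_of_step μ (T := T (κ * θ) e) (le_max_left 1 B) (hTm (κ * θ) e)
    (fun s => (hB s).trans (le_max_right 1 B)) (fun s => hdet _ _ _ (hlρ.trans hρr1))
    (Md * Mb) (Nb * Nd)
    (by rw [mul_assoc, ← mul_assoc Nd, hNMd, one_mul, hNMb]) α β _ _ hstep
  refine ⟨γ, hγ, ?_⟩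
  have hv : ∫ s, (κ * θ * D s 1 0 / (2 * sn)) ^ 2 ∂μ = (κ * θ) ^ 2 / (4 * sn ^ 2) * V := by
    rw [hV, ← integral_const_mul]
    congr 1; funext s
    rw [hD10]
    field_simp
    linear_combination 4 * xσ s ^ 2 * hsg2
  rw [hv] at hγ'
  have hdiff := abs_variance_sub_le κ hV0 hw0 hQ0 hθ hsnsq s1 s2
  have hamgm := sq_mul_sq_le κ hθ hθ1
  have h4 : V * Q / (4 * w ^ 2) * (κ ^ 2 * θ ^ 2) ≤ V * Q / (4 * w ^ 2) * (θ ^ 3 + κ ^ 4 / θ) :=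
    mul_le_mul_of_nonneg_left hamgm (by positivity)
  have h5 := abs_sub_le γ ((κ * θ) ^ 2 / (4 * sn ^ 2) * V / 2) (κ ^ 2 * V / (8 * w))
  linarith

end Scaling

/-! ### The one-cell transfer matrix and the conclusion -/

lemma transfer_det (E v : ℝ) {t : ℝ} (ht : t ≠ 0) : (transfer E t v).det = 1 := by
  rw [Matrix.det_fin_two]
  simp [transfer, ht]

lemma list_prod_det (l : List (Matrix (Fin 2) (Fin 2) ℝ)) (h : ∀ m ∈ l, m.det = 1) :
    l.prod.det = 1 := by
  induction l with
  | nil => simp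
  | cons a l ih =>
    rw [List.prod_cons, Matrix.det_mul, h a (by simp), ih fun m hm => h m (by simp [hm]), one_mul]

lemma measurable_ofFn_prod {S : Type*} [MeasurableSpace S] (L : ℕ)
    (F : Fin L → S → Matrix (Fin 2) (Fin 2) ℝ) (hF : ∀ k i j, Measurable fun s => F k s i j)
    (i j : Fin 2) : Measurable fun s => (List.ofFn fun k => F k s).prod i j := by
  induction L generalizing i j with
  | zero => simp only [List.ofFn_zero]; exact measurable_const
  | succ L ih =>
    simp only [List.ofFn_succ, List.prod_cons]
    exact measurable_matMul (hF 0) (ih (fun k => F k.succ) fun k => hF k.succ) i j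

lemma measurable_transfer {S : Type*} [MeasurableSpace S] (E : ℝ) {t v : S → ℝ} (ht : Measurable t)
    (hv : Measurable v) (i j : Fin 2) : Measurable fun s => transfer E (t s) (v s) i j := by
  fin_cases i <;> fin_cases j <;> simp [transfer] <;> fun_prop

lemma exists_hopping_radius (L : ℕ) (that : ℕ → ℝ) (hthat : ∀ l < L, 0 < that l) :
    ∃ r > (0 : ℝ), ∀ l < L, r ≤ that l := by
  induction L with
  | zero => exact ⟨1, one_pos, by simp⟩
  | succ L ih =>
    obtain ⟨r, hr, h⟩ := ih fun l hl => hthat l (by omega)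
    refine ⟨min r (that L), lt_min hr (hthat L (by omega)), fun l hl => ?_⟩
    rcases Nat.lt_succ_iff_lt_or_eq.mp hl with h' | rfl
    · exact (min_le_left _ _).trans (h l h')
    · exact min_le_right _ _

/-- **Theorem 1(i) (elliptic regime, Lyapunov exponent).**
Let `E_b` be a band edge (no band touching, i.e. `x ≠ 0`) of the periodic background
operator, with non-trivial randomness `𝐄_σ(x_σ²) > 0`.  For `4/5 < η < 4/3` and `ε ≠ 0`
such that `E_b + ε λ^η` lies inside the band for small `λ > 0`, the Lyapunov exponent
`γ_λ(E_b + ε λ^η)` (limit of the finite-volume quantities) exists and equals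
`λ^{2-η} 𝐄_σ(x_σ²) / (8 L |ε x|) + O(λ^{3η/2} + λ^{4-5η/2})`; in particular it is
`B λ^{2-η} + O(λ^{2-η+δ})` for some `δ > 0`. -/
theorem lyapunov_band_edge_elliptic
    {S : Type*} [MeasurableSpace S] (μ : Measure S) [IsProbabilityMeasure μ]
    (L : ℕ) (hL : 1 ≤ L)
    (that vhat : ℕ → ℝ) (ttil vtil : ℕ → S → ℝ)
    (hthat : ∀ l < L, 0 < that l)
    (hmeas : ∀ l < L, Measurable (ttil l) ∧ Measurable (vtil l))
    (hbdd : ∀ l < L, ∀ σ : S, |ttil l σ| ≤ 1 ∧ |vtil l σ| ≤ 1)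
    (hcent : ∀ l < L, (∫ σ, ttil l σ ∂μ) = 0 ∧ (∫ σ, vtil l σ ∂μ) = 0)
    (Eb : ℝ)
    -- `E_b` is a band edge of the periodic operator `H_0`:
    (hedge : ∀ σ : S, |(cellT L that vhat ttil vtil 0 Eb σ).trace| = 2)
    -- `x = ∂_E Tr(𝒯^E_{0,σ})|_{E=E_b}`, and no band touching:
    (x : ℝ)
    (hx : ∀ σ : S, HasDerivAt (fun E => (cellT L that vhat ttil vtil 0 E σ).trace) x Eb)
    (hxne : x ≠ 0)
    -- `x_σ = ∂_λ Tr(𝒯^{E_b}_{λ,σ})|_{λ=0}`, with non-trivial variance: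
    (xσ : S → ℝ)
    (hxσ : ∀ σ : S,
      HasDerivAt (fun lam => (cellT L that vhat ttil vtil lam Eb σ).trace) (xσ σ) 0)
    (hvar : 0 < ∫ σ, (xσ σ) ^ 2 ∂μ)
    (η ε : ℝ) (hη₁ : 4 / 5 < η) (hη₂ : η < 4 / 3) (hε : ε ≠ 0)
    -- the sign of `ε` is such that `E_b + ε λ^η` is inside the band for small `λ`:
    (hinside : ∃ lam₁ > (0:ℝ), ∀ lam : ℝ, 0 < lam → lam < lam₁ →
      ∀ σ : S, |(cellT L that vhat ttil vtil 0 (Eb + ε * lam ^ η) σ).trace| < 2) :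
    ∃ δ > (0:ℝ), ∃ C > (0:ℝ), ∃ lam₀ > (0:ℝ), ∀ lam : ℝ, 0 < lam → lam < lam₀ →
      ∃ g : ℝ,
        Tendsto (fun N : ℕ => lyapFin L that vhat μ ttil vtil lam (Eb + ε * lam ^ η) N)
          atTop (nhds g) ∧
        |g - lam ^ (2 - η) * (∫ σ, (xσ σ) ^ 2 ∂μ) / (8 * L * |ε * x|)|
          ≤ C * (lam ^ (3 * η / 2) + lam ^ (4 - 5 * η / 2)) ∧
        |g - lam ^ (2 - η) * (∫ σ, (xσ σ) ^ 2 ∂μ) / (8 * L * |ε * x|)|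
          ≤ C * lam ^ (2 - η + δ) := by
  obtain ⟨r1, hr1, hr1t⟩ := exists_hopping_radius L that hthat
  set T : ℝ → ℝ → S → Matrix (Fin 2) (Fin 2) ℝ :=
    fun l e s => cellT L that vhat ttil vtil l (Eb + e) s with hTdef
  have hT : ∀ i j, Good μ fun l e s => T l e s i j := fun i j =>
    good_ofFn_prod L (fun k l e s => transfer (Eb + e) (that k + l * ttil k s) (vhat k + l * vtil k s))
      (fun k i j => good_transfer μ (hmeas k k.2).1 (fun s => (hbdd k k.2 s).1) (hcent k k.2).1
        (hmeas k k.2).2 (fun s => (hbdd k k.2 s).2) (hcent k k.2).2 (hthat k k.2) (vhat k) Eb i j) i j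
  have hTm : ∀ l e i j, Measurable fun s => T l e s i j := fun l e i j =>
    measurable_ofFn_prod L
      (fun k s => transfer (Eb + e) (that k + l * ttil k s) (vhat k + l * vtil k s))
      (fun k => measurable_transfer _ (((hmeas k k.2).1.const_mul l).const_add _)
        (((hmeas k k.2).2.const_mul l).const_add _)) i j
  have hdet : ∀ l e s, |l| < r1 → (T l e s).det = 1 := fun l e s hl => by
    refine list_prod_det _ fun m hm => ?_
    obtain ⟨k, rfl⟩ := (List.mem_ofFn' _ _).mp hm
    refine transfer_det _ _ (ne_of_gt ?_)
    have h1 : |l * ttil k s| < that k := by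
      rw [abs_mul]
      calc |l| * |ttil k s| ≤ |l| * 1 :=
            mul_le_mul_of_nonneg_left (hbdd k k.2 s).1 (abs_nonneg l)
        _ < that k := by rw [mul_one]; exact hl.trans_le (hr1t k k.2)
    linarith [(abs_lt.mp h1).1]
  have htr : ∀ s, |(T 0 0 s).trace| = 2 := fun s => by
    simp only [hTdef, add_zero]; exact hedge s
  have hx' : ∀ s, HasDerivAt (fun e => (T 0 e s).trace) x 0 := fun s => by
    have h := hx s
    rw [← add_zero Eb] at h
    exact h.comp_const_add Eb 0
  have hxσ' : ∀ s, HasDerivAt (fun l => (T l 0 s).trace) (xσ s) 0 := fun s => by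
    simp only [hTdef, add_zero]; exact hxσ s
  obtain ⟨C, hC, ρ, hρ, hmain⟩ := lyapunov_scaling μ hT hTm hr1 hdet htr hxne hx' hxσ' hε
  obtain ⟨lam₁, hlam₁, hin⟩ := hinside
  have hpow : ∀ p : ℝ, 0 < p → ∀ᶠ lam in nhdsWithin (0 : ℝ) (Ioi 0), lam ^ p < ρ := fun p hp => by
    have h1 : Tendsto (fun lam : ℝ => lam ^ p) (nhdsWithin 0 (Ioi 0)) (nhds (0 ^ p)) :=
      (Real.continuousAt_rpow_const 0 p (Or.inr hp.le)).tendsto.mono_left nhdsWithin_le_nhds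
    rw [Real.zero_rpow hp.ne'] at h1
    exact h1.eventually (gt_mem_nhds hρ)
  obtain ⟨lam₂, hlam₂, hsmall⟩ := mem_nhdsGT_iff_exists_Ioo_subset.mp
    ((hpow (η / 2) (by linarith)).and (hpow (1 - η / 2) (by linarith)))
  rw [mem_Ioi] at hlam₂
  set δ := min (5 * η / 2 - 2) (2 - 3 * η / 2) with hδ
  have hδ0 : 0 < δ := lt_min (by linarith) (by linarith)
  refine ⟨δ, hδ0, 2 * C, by positivity, min 1 (min lam₁ lam₂),
    lt_min one_pos (lt_min hlam₁ hlam₂), fun lam h0 hlt => ?_⟩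
  have hlt1 : lam < 1 := hlt.trans_le (min_le_left _ _)
  have hltl1 : lam < lam₁ := hlt.trans_le ((min_le_right _ _).trans (min_le_left _ _))
  have hltl2 : lam < lam₂ := hlt.trans_le ((min_le_right _ _).trans (min_le_right _ _))
  obtain ⟨hθρ, hκρ⟩ := hsmall ⟨h0, hltl2⟩
  have hθsq : (lam ^ (η / 2)) ^ 2 = lam ^ η := by
    rw [← Real.rpow_natCast, ← Real.rpow_mul h0.le]; congr 1; push_cast; ring
  have hκθ : lam ^ (1 - η / 2) * lam ^ (η / 2) = lam := by
    rw [← Real.rpow_add h0, sub_add_cancel, Real.rpow_one]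
  have hκsq : (lam ^ (1 - η / 2)) ^ 2 = lam ^ (2 - η) := by
    rw [← Real.rpow_natCast, ← Real.rpow_mul h0.le]; congr 1; push_cast; ring
  have hθ3 : (lam ^ (η / 2)) ^ 3 = lam ^ (3 * η / 2) := by
    rw [← Real.rpow_natCast, ← Real.rpow_mul h0.le]; congr 1; push_cast; ring
  have hκ4 : (lam ^ (1 - η / 2)) ^ 4 / lam ^ (η / 2) = lam ^ (4 - 5 * η / 2) := by
    rw [← Real.rpow_natCast, ← Real.rpow_mul h0.le, ← Real.rpow_sub h0]; congr 1; push_cast; ring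
  obtain ⟨γ, hγ, hγ'⟩ := hmain (lam ^ (η / 2)) (lam ^ (1 - η / 2)) (Real.rpow_pos_of_pos h0 _) hθρ
    (Real.rpow_pos_of_pos h0 _) hκρ (fun s => by rw [hθsq]; exact hin lam h0 hltl1 s)
  rw [hθsq, hκθ] at hγ
  rw [hκsq, hθ3, hκ4] at hγ'
  have hL1 : (1 : ℝ) ≤ L := by exact_mod_cast hL
  have hL0 : (0 : ℝ) < L := by linarith
  have hsum : 0 ≤ C * (lam ^ (3 * η / 2) + lam ^ (4 - 5 * η / 2)) :=
    mul_nonneg hC.le (add_nonneg (Real.rpow_nonneg h0.le _) (Real.rpow_nonneg h0.le _))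
  have hbound : |(L : ℝ)⁻¹ * γ - lam ^ (2 - η) * (∫ σ, (xσ σ) ^ 2 ∂μ) / (8 * L * |ε * x|)|
      ≤ C * (lam ^ (3 * η / 2) + lam ^ (4 - 5 * η / 2)) := by
    have hw : |ε * x| ≠ 0 := abs_ne_zero.mpr (mul_ne_zero hε hxne)
    have h1 : (L : ℝ)⁻¹ * γ - lam ^ (2 - η) * (∫ σ, (xσ σ) ^ 2 ∂μ) / (8 * L * |ε * x|)
        = (L : ℝ)⁻¹ * (γ - lam ^ (2 - η) * (∫ σ, (xσ σ) ^ 2 ∂μ) / (8 * |ε * x|)) := by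
      field_simp
    rw [h1, abs_mul, abs_of_pos (inv_pos.mpr hL0)]
    calc (L : ℝ)⁻¹ * |γ - lam ^ (2 - η) * (∫ σ, (xσ σ) ^ 2 ∂μ) / (8 * |ε * x|)|
        ≤ 1 * |γ - lam ^ (2 - η) * (∫ σ, (xσ σ) ^ 2 ∂μ) / (8 * |ε * x|)| :=
          mul_le_mul_of_nonneg_right (inv_le_one_of_one_le₀ hL1) (abs_nonneg _)
      _ ≤ _ := by rw [one_mul]; exact hγ'
  refine ⟨(L : ℝ)⁻¹ * γ, ?_, hbound.trans (by linarith), hbound.trans ?_⟩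
  · refine (hγ.const_mul (L : ℝ)⁻¹).congr fun N => ?_
    simp only [lyapFin, prodT, hTdef, mul_inv]
    ring
  · -- both error exponents exceed `2 - η` by at least `δ`
    have e1 : lam ^ (3 * η / 2) ≤ lam ^ (2 - η + δ) :=
      Real.rpow_le_rpow_of_exponent_ge h0 hlt1.le (by linarith [min_le_left (5 * η / 2 - 2) (2 - 3 * η / 2)])
    have e2 : lam ^ (4 - 5 * η / 2) ≤ lam ^ (2 - η + δ) :=
      Real.rpow_le_rpow_of_exponent_ge h0 hlt1.le (by linarith [min_le_right (5 * η / 2 - 2) (2 - 3 * η / 2)])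
    nlinarith

end BandEdge
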